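/- arXiv:1511.05906 — 4 statements merged into one kernel-verified Lean document; each statement's English description precedes it below -/
import Mathlib

section
/- Let T : [0,1] → [0,1] be a Markov interval map satisfying hypotheses (A1)–(A4). Then T is conservative with respect to Lebesgue measure: for every Borel set A ⊆ [0,1] of positive Lebesgue measure, almost every point of A returns to A infinitely often under iteration of T (equivalently, there is no wandering set of positive Lebesgue measure). -/
open MeasureTheory Set Filter

/-- An interval map `T : [0,1] → [0,1]` which is Markov with respect to the
partition `{[a_j, a_{j+1}]}` given by the strictly increasing sequence
`0 = a_0 < a_1 < ⋯` with supremum `1`, satisfying hypotheses (A1)–(A4).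
The branch extensions are `φ j`, with first and second derivatives
`φd j` and `φdd j` (taken within `[a_j, a_{j+1}]`). -/
structure IntervalMapSetup where
  T : ℝ → ℝ
  a : ℕ → ℝ
  φ : ℕ → ℝ → ℝ
  φd : ℕ → ℝ → ℝ
  φdd : ℕ → ℝ → ℝ
  Λ : ℝ
  K : ℝ
  β : ℝ
  c₁ : ℝ
  c₂ : ℝ
  ha0 : a 0 = 0
  ha_mono : StrictMono a
  ha_lt : ∀ j, a j < 1
  ha_lim : Tendsto a atTop (nhds 1)
  hT_maps : MapsTo T (Icc 0 1) (Icc 0 1)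
  -- `T` coincides with the branch `φ j` on the open interval `(a_j, a_{j+1})`
  hT_eq : ∀ j, ∀ x ∈ Ioo (a j) (a (j+1)), T x = φ j x
  -- (A1): each branch is a bijection onto `[0,1]`, `C²` up to the boundary
  hφ_bij : ∀ j, BijOn (φ j) (Icc (a j) (a (j+1))) (Icc 0 1)
  hφ_d : ∀ j, ∀ x ∈ Icc (a j) (a (j+1)),
    HasDerivWithinAt (φ j) (φd j x) (Icc (a j) (a (j+1))) x
  hφ_dd : ∀ j, ∀ x ∈ Icc (a j) (a (j+1)),
    HasDerivWithinAt (φd j) (φdd j x) (Icc (a j) (a (j+1))) x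
  hφdd_cont : ∀ j, ContinuousOn (φdd j) (Icc (a j) (a (j+1)))
  -- (A2): uniform expansion on branches `j ≥ 1`
  hΛ : 1 < Λ
  hA2 : ∀ j, 1 ≤ j → ∀ x ∈ Icc (a j) (a (j+1)), Λ ≤ |φd j x|
  -- (A3): distortion bound
  hK : 0 < K
  hA3 : ∀ j, ∀ x ∈ Icc (a j) (a (j+1)), |φdd j x| / (φd j x) ^ 2 ≤ K
  -- (A4): indifferent fixed point at 0
  hβ : 0 ≤ β
  hc₁ : 0 < c₁
  hc₁₂ : c₁ < c₂
  hA4_conv : ConvexOn ℝ (Icc (a 0) (a 1)) (φ 0)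
  hA4_fix : φ 0 0 = 0
  hA4_d1 : φd 0 0 = 1
  hA4_exp : ∀ x : ℝ, 0 < x → x ≤ a 1 → 1 < φd 0 x
  hA4_dd : ∀ x ∈ Ioo (0:ℝ) (a 1), c₁ * x ^ β ≤ φdd 0 x ∧ φdd 0 x ≤ c₂ * x ^ β

/-!
A wandering set is porous. If no point of `B` ever returns to `B`, and `f` is an inverse branch of
some `T^[m]` with `m ≥ 1`, then `f '' B` is disjoint from `B`. When `f` has distortion bounded
independently of `m`, `f '' B` fills a definite proportion of a ball of radius comparable to
`|f'|` around each point of the range of `f`. If almost every point lies in the range of such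
branches of arbitrarily small size, then almost no point of `B` is a Lebesgue density point, so `B`
is null.

At an indifferent fixed point the derivatives of the iterated branches are not uniformly
contracting, so such branches are built from the jump transformation: wait until the orbit leaves
the neutral branch, then apply one expanding branch. Each jump contracts by `Λ⁻¹`, so the
distortion of a composition of jumps is bounded by a geometric series as soon as that of a single
jump is bounded. For the latter, the images of the complement `J` of the neutral branch
under the iterates of its inverse `g` are disjoint intervals, hence of total length at most `1`,
and the distortion of `g^[k]` on `J` is controlled by the sum of their lengths.
-/

open Real Function Metric
open scoped Topology ENNReal

section Measure

lemma measure_eq_zero_of_frequently_le_measure_diff_div {α : Type*} [MetricSpace α]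
    [MeasurableSpace α] [BorelSpace α] [SecondCountableTopology α] [HasBesicovitchCovering α]
    {μ : Measure α} [IsLocallyFiniteMeasure μ] {s : Set α} (hs : MeasurableSet s)
    {κ : ℝ≥0∞} (hκ : κ ≠ 0)
    (hporous : ∀ᵐ x ∂μ, x ∈ s →
      ∃ᶠ r in 𝓝[>] 0, κ ≤ μ (closedBall x r \ s) / μ (closedBall x r)) :
    μ s = 0 := by
  refine measure_eq_zero_iff_ae_notMem.2 ?_
  filter_upwards [hporous, Besicovitch.ae_tendsto_measure_inter_div_of_measurableSet μ hs.compl]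
    with x hx hdensity hxs
  have hzero : Tendsto (fun r => μ (closedBall x r \ s) / μ (closedBall x r)) (𝓝[>] 0) (𝓝 0) := by
    simpa only [sdiff_eq, inter_comm, indicator_of_notMem (notMem_compl_iff.2 hxs)] using hdensity
  exact hκ (nonpos_iff_eq_zero.1 (ge_of_tendsto_of_frequently hzero (hx hxs)))

lemma ofReal_mul_volume_le_volume_image {f : ℝ → ℝ} {s : Set ℝ} {c : ℝ} (hs : MeasurableSet s)
    (hf : ∀ x ∈ s, DifferentiableAt ℝ f x) (hinj : InjOn f s) (hc : ∀ x ∈ s, c ≤ |deriv f x|) :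
    ENNReal.ofReal c * volume s ≤ volume (f '' s) := by
  have hvolume : volume (f '' s) = ∫⁻ x in s, ENNReal.ofReal |deriv f x| := by
    simpa using lintegral_image_eq_lintegral_abs_deriv_mul hs
      (fun x hx => (hf x hx).hasDerivAt.hasDerivWithinAt) hinj (fun _ => 1)
  rw [hvolume, ← setLIntegral_const]
  exact setLIntegral_mono' hs fun x hx => ENNReal.ofReal_le_ofReal (hc x hx)

end Measure

section MeanValue

variable {f : ℝ → ℝ} {D : Set ℝ} {x y p q C : ℝ}

lemma exists_sub_eq_deriv_mul_sub (hD : Convex ℝ D) (hf : ∀ z ∈ D, DifferentiableAt ℝ f z)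
    (hx : x ∈ D) (hy : y ∈ D) : ∃ c ∈ D, f x - f y = deriv f c * (x - y) := by
  obtain ⟨c, hc, hslope⟩ := domain_mvt
    (fun z hz => (hf z hz).hasDerivAt.hasFDerivAt.hasFDerivWithinAt) hD hy hx
  exact ⟨c, hD.segment_subset hy hx hc, by simpa [mul_comm] using hslope⟩

lemma abs_le_exp_mul_abs_of_abs_log_sub_le {a b : ℝ} (ha : a ≠ 0) (hb : b ≠ 0)
    (h : |log a - log b| ≤ C) : |a| ≤ exp C * |b| := by
  rw [← exp_log_eq_abs ha, ← exp_log_eq_abs hb, ← exp_add]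
  exact exp_le_exp.2 (by linarith [(abs_le.1 h).2])

lemma abs_image_sub_mul_abs_sub_le (hD : Convex ℝ D) (hf : ∀ z ∈ D, DifferentiableAt ℝ f z)
    (hf0 : ∀ z ∈ D, deriv f z ≠ 0)
    (hlog : ∀ z ∈ D, ∀ w ∈ D, |log (deriv f z) - log (deriv f w)| ≤ C)
    (hx : x ∈ D) (hy : y ∈ D) (hp : p ∈ D) (hq : q ∈ D) :
    |f x - f y| * |p - q| ≤ exp C * |f p - f q| * |x - y| := by
  obtain ⟨c, hc, hxy⟩ := exists_sub_eq_deriv_mul_sub hD hf hx hy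
  obtain ⟨d, hd, hpq⟩ := exists_sub_eq_deriv_mul_sub hD hf hp hq
  have hcd : |deriv f c| ≤ exp C * |deriv f d| :=
    abs_le_exp_mul_abs_of_abs_log_sub_le (hf0 c hc) (hf0 d hd) (hlog c hc d hd)
  rw [hxy, hpq, abs_mul, abs_mul]
  calc |deriv f c| * |x - y| * |p - q|
      ≤ exp C * |deriv f d| * |x - y| * |p - q| := by gcongr
    _ = exp C * (|deriv f d| * |p - q|) * |x - y| := by ring

end MeanValue

/-! ### Distortion -/

/-- `f` is a differentiable map on `D` with nonvanishing derivative of size at most `ρ`, whose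
logarithm of the derivative is `C`-Lipschitz: the distortion control of Markov map theory. Since
`Real.log` depends only on the absolute value, orientation-reversing maps are included. -/
structure BoundedDistortionOn (f : ℝ → ℝ) (D : Set ℝ) (ρ C : ℝ) : Prop where
  differentiableAt : ∀ x ∈ D, DifferentiableAt ℝ f x
  deriv_ne_zero : ∀ x ∈ D, deriv f x ≠ 0
  abs_deriv_le : ∀ x ∈ D, |deriv f x| ≤ ρ
  abs_log_deriv_sub_le : ∀ x ∈ D, ∀ y ∈ D, |log (deriv f x) - log (deriv f y)| ≤ C * |x - y|

namespace BoundedDistortionOn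

variable {f g : ℝ → ℝ} {D E : Set ℝ} {ρ σ C C' : ℝ} {x y : ℝ}

lemma abs_image_sub_le (hf : BoundedDistortionOn f D ρ C) (hD : Convex ℝ D)
    (hx : x ∈ D) (hy : y ∈ D) : |f x - f y| ≤ ρ * |x - y| := by
  obtain ⟨c, hc, hxy⟩ := exists_sub_eq_deriv_mul_sub hD hf.differentiableAt hx hy
  rw [hxy, abs_mul]
  exact mul_le_mul_of_nonneg_right (hf.abs_deriv_le c hc) (abs_nonneg _)

protected lemma id (D : Set ℝ) (hC : 0 ≤ C) : BoundedDistortionOn id D 1 C where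
  differentiableAt _ _ := differentiableAt_id
  deriv_ne_zero _ _ := by simp
  abs_deriv_le _ _ := by simp
  abs_log_deriv_sub_le x _ y _ := by simpa using mul_nonneg hC (abs_nonneg (x - y))

protected lemma comp (hf : BoundedDistortionOn f D ρ C) (hg : BoundedDistortionOn g E σ C')
    (hC : 0 ≤ C) (hE : Convex ℝ E) (hmaps : MapsTo g E D) :
    BoundedDistortionOn (f ∘ g) E (ρ * σ) (C * σ + C') := by
  have hderiv : ∀ x ∈ E, deriv (f ∘ g) x = deriv f (g x) * deriv g x := fun x hx =>
    deriv_comp x (hf.differentiableAt _ (hmaps hx)) (hg.differentiableAt x hx)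
  have hne : ∀ x ∈ E, deriv f (g x) ≠ 0 := fun x hx => hf.deriv_ne_zero _ (hmaps hx)
  constructor
  · exact fun x hx => (hf.differentiableAt _ (hmaps hx)).comp x (hg.differentiableAt x hx)
  · intro x hx
    rw [hderiv x hx]
    exact mul_ne_zero (hne x hx) (hg.deriv_ne_zero x hx)
  · intro x hx
    have hfx := hf.abs_deriv_le _ (hmaps hx)
    rw [hderiv x hx, abs_mul]
    exact mul_le_mul hfx (hg.abs_deriv_le x hx) (abs_nonneg _) ((abs_nonneg _).trans hfx)
  · intro x hx y hy
    rw [hderiv x hx, hderiv y hy, log_mul (hne x hx) (hg.deriv_ne_zero x hx),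
      log_mul (hne y hy) (hg.deriv_ne_zero y hy), add_sub_add_comm]
    calc |log (deriv f (g x)) - log (deriv f (g y)) + (log (deriv g x) - log (deriv g y))|
        ≤ C * |g x - g y| + C' * |x - y| := (abs_add_le _ _).trans <| add_le_add
          (hf.abs_log_deriv_sub_le _ (hmaps hx) _ (hmaps hy)) (hg.abs_log_deriv_sub_le x hx y hy)
      _ ≤ C * (σ * |x - y|) + C' * |x - y| := by gcongr; exact hg.abs_image_sub_le hE hx hy
      _ = (C * σ + C') * |x - y| := by ring

lemma exists_closedBall (hf : BoundedDistortionOn f (Ioo 0 1) ρ C) (hC : 0 ≤ C) {z : ℝ}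
    (hz : z ∈ Ioo (0 : ℝ) 1) :
    ∃ r, 0 < r ∧ r ≤ exp C * ρ ∧ MapsTo f (Ioo 0 1) (closedBall (f z) r) ∧
      ∀ y ∈ Ioo (0 : ℝ) 1, exp (-(2 * C)) * r ≤ |deriv f y| := by
  have hdist : ∀ x ∈ Ioo (0 : ℝ) 1, ∀ y ∈ Ioo (0 : ℝ) 1, |x - y| ≤ 1 := fun x hx y hy =>
    abs_le.2 ⟨by linarith [hx.1, hy.2], by linarith [hx.2, hy.1]⟩
  have hcompare : ∀ x ∈ Ioo (0 : ℝ) 1, ∀ y ∈ Ioo (0 : ℝ) 1,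
      |deriv f x| ≤ exp C * |deriv f y| := fun x hx y hy =>
    abs_le_exp_mul_abs_of_abs_log_sub_le (hf.deriv_ne_zero x hx) (hf.deriv_ne_zero y hy)
      ((hf.abs_log_deriv_sub_le x hx y hy).trans (mul_le_of_le_one_right hC (hdist x hx y hy)))
  refine ⟨exp C * |deriv f z|, mul_pos (exp_pos C) (abs_pos.2 (hf.deriv_ne_zero z hz)),
    by gcongr; exact hf.abs_deriv_le z hz, fun y hy => ?_, fun y hy => ?_⟩
  · obtain ⟨c, hc, hslope⟩ :=
      exists_sub_eq_deriv_mul_sub (convex_Ioo 0 1) hf.differentiableAt hy hz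
    rw [mem_closedBall, Real.dist_eq, hslope, abs_mul]
    exact (mul_le_of_le_one_right (abs_nonneg _) (hdist y hy z hz)).trans (hcompare c hc z hz)
  · calc exp (-(2 * C)) * (exp C * |deriv f z|)
        ≤ exp (-(2 * C)) * (exp C * (exp C * |deriv f y|)) := by
          gcongr; exact hcompare z hz y hy
      _ = |deriv f y| := by
          rw [← mul_assoc, ← mul_assoc, ← exp_add, ← exp_add,
            show -(2 * C) + C + C = 0 by ring, exp_zero, one_mul]

protected lemma invFunOn {T : ℝ → ℝ} {s t : Set ℝ} {Λ : ℝ} (hs : Convex ℝ s) (ht : IsOpen t)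
    (hbij : BijOn T s t) (hT : ∀ x ∈ s, DifferentiableAt ℝ T x) (hΛ : 0 < Λ)
    (hexp : ∀ x ∈ s, Λ ≤ |deriv T x|)
    (hdist : ∀ x ∈ s, ∀ y ∈ s, |log (deriv T x) - log (deriv T y)| ≤ C * |T x - T y|) :
    BoundedDistortionOn (invFunOn T s) t Λ⁻¹ C := by
  have hmaps : MapsTo (invFunOn T s) t s := hbij.surjOn.mapsTo_invFunOn
  have hright : ∀ y ∈ t, T (invFunOn T s y) = y := hbij.surjOn.rightInvOn_invFunOn
  have hcont : ∀ y ∈ t, ContinuousAt (invFunOn T s) y := by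
    suffices LipschitzOnWith (Real.toNNReal Λ⁻¹) (invFunOn T s) t from
      fun y hy => this.continuousOn.continuousAt (ht.mem_nhds hy)
    refine LipschitzOnWith.of_dist_le' fun x hx y hy => ?_
    obtain ⟨c, hc, hslope⟩ := exists_sub_eq_deriv_mul_sub hs hT (hmaps hx) (hmaps hy)
    rw [hright x hx, hright y hy] at hslope
    rw [Real.dist_eq, Real.dist_eq, hslope, abs_mul, le_inv_mul_iff₀ hΛ]
    exact mul_le_mul_of_nonneg_right (hexp c hc) (abs_nonneg _)
  have hT0 : ∀ x ∈ s, deriv T x ≠ 0 := fun x hx => abs_pos.1 (hΛ.trans_le (hexp x hx))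
  have hinv : ∀ y ∈ t, HasDerivAt (invFunOn T s) (deriv T (invFunOn T s y))⁻¹ y := fun y hy =>
    (hT _ (hmaps hy)).hasDerivAt.of_local_left_inverse (hcont y hy) (hT0 _ (hmaps hy))
      (mem_of_superset (ht.mem_nhds hy) hright)
  constructor
  · exact fun y hy => (hinv y hy).differentiableAt
  · intro y hy
    rw [(hinv y hy).deriv]
    exact inv_ne_zero (hT0 _ (hmaps hy))
  · intro y hy
    rw [(hinv y hy).deriv, abs_inv]
    exact inv_anti₀ hΛ (hexp _ (hmaps hy))
  · intro x hx y hy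
    have h := hdist _ (hmaps hx) _ (hmaps hy)
    rw [hright x hx, hright y hy] at h
    rwa [(hinv x hx).deriv, (hinv y hy).deriv, log_inv, log_inv, neg_sub_neg, abs_sub_comm]

end BoundedDistortionOn

section Iterates

variable {g : ℝ → ℝ} {D J : Set ℝ} {a b ρ K x y : ℝ}

lemma BoundedDistortionOn.iterate (hg : BoundedDistortionOn g D ρ K) (hρ : 0 ≤ ρ) (hK : 0 ≤ K)
    (hD : Convex ℝ D) (hmaps : MapsTo g D D) (k : ℕ) :
    BoundedDistortionOn g^[k] D (ρ ^ k) (K * ∑ i ∈ Finset.range k, ρ ^ i) := by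
  induction k with
  | zero => simpa using BoundedDistortionOn.id D le_rfl
  | succ k ih =>
    have h := ih.comp hg (by positivity) hD hmaps
    rw [iterate_succ, pow_succ]
    convert h using 1
    rw [Finset.sum_range_succ', mul_assoc, Finset.sum_mul]
    simp only [pow_succ, pow_zero, mul_add, mul_one]

lemma BoundedDistortionOn.abs_log_deriv_iterate_sub_le (hg : BoundedDistortionOn g D ρ K)
    (hρ : 0 ≤ ρ) (hK : 0 ≤ K) (hD : Convex ℝ D) (hmaps : MapsTo g D D) (hx : x ∈ D) (hy : y ∈ D)
    (k : ℕ) :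
    |log (deriv g^[k] x) - log (deriv g^[k] y)| ≤
      K * ∑ i ∈ Finset.range k, |g^[i] x - g^[i] y| := by
  induction k with
  | zero => simp
  | succ k ih =>
    have hk := hg.iterate hρ hK hD hmaps k
    have hlog : ∀ z ∈ D,
        log (deriv g^[k + 1] z) = log (deriv g (g^[k] z)) + log (deriv g^[k] z) := by
      intro z hz
      have hgz := hmaps.iterate k hz
      rw [iterate_succ', deriv_comp z (hg.differentiableAt _ hgz) (hk.differentiableAt z hz),
        log_mul (hg.deriv_ne_zero _ hgz) (hk.deriv_ne_zero z hz)]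
    rw [hlog x hx, hlog y hy, add_sub_add_comm, Finset.sum_range_succ, mul_add, add_comm (K * _)]
    exact (abs_add_le _ _).trans <| add_le_add
      (hg.abs_log_deriv_sub_le _ (hmaps.iterate k hx) _ (hmaps.iterate k hy)) ih

/-- The intervals with endpoints `g^[i] x` and `g^[i] y` do not overlap. -/
lemma sum_abs_iterate_sub_iterate_le (hD : D ⊆ Icc a b) (hmaps : MapsTo g D D)
    (hmono : MonotoneOn g D) (hx : x ∈ D) (hy : y ∈ D) (hxy : g x ≤ y) (hyx : g y ≤ x) (k : ℕ) :
    ∑ i ∈ Finset.range k, |g^[i] x - g^[i] y| ≤ b - a := by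
  wlog hle : y ≤ x generalizing x y
  · simpa only [abs_sub_comm] using this hy hx hyx hxy (le_of_not_ge hle)
  have hiter : ∀ i, MonotoneOn g^[i] D := fun i => by
    induction i with
    | zero => exact monotoneOn_id
    | succ i ih => exact iterate_succ g i ▸ ih.comp hmono hmaps
  calc ∑ i ∈ Finset.range k, |g^[i] x - g^[i] y|
      ≤ ∑ i ∈ Finset.range k, (g^[i] x - g^[i + 1] x) := by
        refine Finset.sum_le_sum fun i _ => ?_
        rw [abs_of_nonneg (sub_nonneg.2 (hiter i hy hx hle)), iterate_succ_apply]
        exact sub_le_sub_left (hiter i (hmaps hx) hy hxy) _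
    _ = x - g^[k] x := Finset.sum_range_sub' (fun i => g^[i] x) k
    _ ≤ b - a := sub_le_sub (hD hx).2 (hD (hmaps.iterate k hx)).1

/-- No contraction rate is needed: the images of `J` under the iterates of `g` do not overlap, so
their lengths are summable, and by distortion each of them scales lengths within `J` almost
linearly. -/
lemma BoundedDistortionOn.exists_iterate (hg : BoundedDistortionOn g D 1 K) (hK : 0 ≤ K)
    (hD : Convex ℝ D) (hDab : D ⊆ Icc a b) (hmaps : MapsTo g D D) (hmono : MonotoneOn g D)
    (hJD : J ⊆ D) (hJ : Convex ℝ J) (hJnt : J.Nontrivial) (hgJ : ∀ x ∈ J, ∀ y ∈ J, g x ≤ y) :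
    ∃ C, 0 ≤ C ∧ ∀ k, BoundedDistortionOn g^[k] J 1 C := by
  obtain ⟨p, hp, q, hq, hpq⟩ := hJnt
  have hpq0 : 0 < |p - q| := abs_pos.2 (sub_ne_zero.2 hpq)
  have hab : 0 ≤ b - a := sub_nonneg.2 ((hDab (hJD hp)).1.trans (hDab (hJD hp)).2)
  have hsum : ∀ x ∈ J, ∀ y ∈ J, ∀ k, ∑ i ∈ Finset.range k, |g^[i] x - g^[i] y| ≤ b - a :=
    fun x hx y hy => sum_abs_iterate_sub_iterate_le hDab hmaps hmono (hJD hx) (hJD hy)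
      (hgJ x hx y hy) (hgJ y hy x hx)
  have hiter := hg.iterate zero_le_one hK hD hmaps
  have hlog : ∀ k, ∀ x ∈ J, ∀ y ∈ J, |log (deriv g^[k] x) - log (deriv g^[k] y)| ≤
      K * ∑ i ∈ Finset.range k, |g^[i] x - g^[i] y| := fun k x hx y hy =>
    hg.abs_log_deriv_iterate_sub_le zero_le_one hK hD hmaps (hJD hx) (hJD hy) k
  have hscale : ∀ i, ∀ x ∈ J, ∀ y ∈ J, |g^[i] x - g^[i] y| ≤
      |g^[i] p - g^[i] q| * (exp (K * (b - a)) * |x - y| / |p - q|) := by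
    intro i x hx y hy
    have h := abs_image_sub_mul_abs_sub_le hJ
      (fun z hz => (hiter i).differentiableAt z (hJD hz))
      (fun z hz => (hiter i).deriv_ne_zero z (hJD hz))
      (fun z hz w hw => (hlog i z hz w hw).trans
        (mul_le_mul_of_nonneg_left (hsum z hz w hw i) hK)) hx hy hp hq
    rw [← mul_div_assoc, le_div_iff₀ hpq0]
    exact h.trans_eq (by ring)
  refine ⟨K * ((b - a) * exp (K * (b - a)) / |p - q|), by positivity, fun k => ⟨?_, ?_, ?_, ?_⟩⟩
  · exact fun x hx => (hiter k).differentiableAt x (hJD hx)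
  · exact fun x hx => (hiter k).deriv_ne_zero x (hJD hx)
  · exact fun x hx => by simpa only [one_pow] using (hiter k).abs_deriv_le x (hJD hx)
  · intro x hx y hy
    calc |log (deriv g^[k] x) - log (deriv g^[k] y)|
        ≤ K * ∑ i ∈ Finset.range k, |g^[i] x - g^[i] y| := hlog k x hx y hy
      _ ≤ K * ((∑ i ∈ Finset.range k, |g^[i] p - g^[i] q|) *
            (exp (K * (b - a)) * |x - y| / |p - q|)) := by
          rw [Finset.sum_mul]
          gcongr with i
          exact hscale i x hx y hy
      _ ≤ K * ((b - a) * (exp (K * (b - a)) * |x - y| / |p - q|)) := by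
          gcongr; exact hsum p hp q hq k
      _ = K * ((b - a) * exp (K * (b - a)) / |p - q|) * |x - y| := by ring

end Iterates

/-! ### Inverse branches of iterates -/

/-- `f` is an inverse branch on `D` of the `m`-th iterate of a self-map `T` of the interval
`Ioo 0 1`, with contraction rate `ρ` and distortion constant `C`. -/
structure IsInverseBranch (T : ℝ → ℝ) (m : ℕ) (f : ℝ → ℝ) (D : Set ℝ) (ρ C : ℝ) : Prop
    extends BoundedDistortionOn f D ρ C where
  mapsTo : MapsTo f D (Ioo 0 1)
  leftInvOn : LeftInvOn T^[m] f D

namespace IsInverseBranch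

variable {T f g : ℝ → ℝ} {m n : ℕ} {D E B : Set ℝ} {ρ σ C C' z : ℝ}

protected lemma id (T : ℝ → ℝ) (hC : 0 ≤ C) : IsInverseBranch T 0 id (Ioo 0 1) 1 C where
  toBoundedDistortionOn := .id _ hC
  mapsTo := mapsTo_id _
  leftInvOn _ _ := rfl

protected lemma comp (hf : IsInverseBranch T m f D ρ C) (hg : IsInverseBranch T n g E σ C')
    (hC : 0 ≤ C) (hE : Convex ℝ E) (hmaps : MapsTo g E D) :
    IsInverseBranch T (n + m) (f ∘ g) E (ρ * σ) (C * σ + C') where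
  toBoundedDistortionOn := hf.toBoundedDistortionOn.comp hg.toBoundedDistortionOn hC hE hmaps
  mapsTo := hf.mapsTo.comp hmaps
  leftInvOn := by simpa only [iterate_add] using hg.leftInvOn.comp hf.leftInvOn hmaps

/-- The portion of the ball that is filled outside `B` is `f '' B`. -/
lemma exists_le_volume_diff_div (hf : IsInverseBranch T m f (Ioo 0 1) ρ C) (hC : 0 ≤ C)
    (hB : MeasurableSet B) (hB01 : B ⊆ Ioo 0 1) (hreturn : ∀ x ∈ B, T^[m] x ∉ B)
    (hz : z ∈ Ioo (0 : ℝ) 1) :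
    ∃ r, 0 < r ∧ r ≤ exp C * ρ ∧ ENNReal.ofReal (exp (-(2 * C)) / 2) * volume B ≤
      volume (closedBall (f z) r \ B) / volume (closedBall (f z) r) := by
  obtain ⟨r, hr, hrρ, hball, hderiv⟩ := hf.exists_closedBall hC hz
  have hsub : f '' B ⊆ closedBall (f z) r \ B := by
    rintro _ ⟨y, hy, rfl⟩
    exact ⟨hball (hB01 hy), fun hfy => hreturn _ hfy (by rwa [hf.leftInvOn (hB01 hy)])⟩
  have hvolume : ENNReal.ofReal (exp (-(2 * C)) * r) * volume B ≤ volume (f '' B) :=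
    ofReal_mul_volume_le_volume_image hB (fun y hy => hf.differentiableAt y (hB01 hy))
      (hf.leftInvOn.injOn.mono hB01) fun y hy => hderiv y (hB01 hy)
  refine ⟨r, hr, hrρ, ?_⟩
  rw [Real.volume_closedBall, ENNReal.le_div_iff_mul_le (.inl (by simpa using hr))
    (.inl ENNReal.ofReal_ne_top), mul_right_comm, ← ENNReal.ofReal_mul (by positivity),
    show exp (-(2 * C)) / 2 * (2 * r) = exp (-(2 * C)) * r by ring]
  exact hvolume.trans (measure_mono hsub)

end IsInverseBranch

lemma conservative_of_forall_exists_isInverseBranch {T : ℝ → ℝ} {C : ℝ}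
    (hT : Measure.QuasiMeasurePreserving T (volume.restrict (Ioo 0 1))
      (volume.restrict (Ioo 0 1)))
    (hC : 0 ≤ C) (hbranch : ∀ᵐ x ∂volume.restrict (Ioo 0 1), ∀ ε > 0, ∃ m ≠ 0, ∃ f, ∃ ρ < ε,
      IsInverseBranch T m f (Ioo 0 1) ρ C ∧ x ∈ f '' Ioo 0 1) :
    Conservative T (volume.restrict (Ioo 0 1)) := by
  refine ⟨hT, fun s hs hs0 => ?_⟩
  by_contra! hwandering
  set B := s ∩ Ioo 0 1
  have hB : MeasurableSet B := hs.inter measurableSet_Ioo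
  rw [Measure.restrict_apply hs] at hs0
  have hκ : ENNReal.ofReal (exp (-(2 * C)) / 2) * volume B ≠ 0 :=
    mul_ne_zero (by simpa using exp_pos _) hs0
  refine hs0 (measure_eq_zero_of_frequently_le_measure_diff_div hB hκ ?_)
  filter_upwards [(ae_restrict_iff' measurableSet_Ioo).1 hbranch] with x hx hxB
  refine (nhdsGT_basis 0).frequently_iff.2 fun ε hε => ?_
  obtain ⟨m, hm, f, ρ, hρ, hf, z, hz, rfl⟩ := hx hxB.2 (exp (-C) * ε) (by positivity)
  obtain ⟨r, hr, hrρ, hdensity⟩ := hf.exists_le_volume_diff_div hC hB inter_subset_right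
    (fun y hy hy' => hwandering y hy.1 m hm hy'.1) hz
  refine ⟨r, ⟨hr, hrρ.trans_lt ?_⟩, hdensity⟩
  calc exp C * ρ < exp C * (exp (-C) * ε) := by gcongr
    _ = ε := by rw [← mul_assoc, ← exp_add, add_neg_cancel, exp_zero, one_mul]

section InvariantCore

variable {α : Type*} {f g : α → α} {s : Set α} {x : α}

/-- The set of points whose whole forward orbit under `f` stays in `s`; for a Markov map and the
union `s` of its branch domains, these are the points on which the symbolic coding is defined. -/
def invariantCore (f : α → α) (s : Set α) : Set α := ⋂ n, f^[n] ⁻¹' s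

lemma mem_invariantCore : x ∈ invariantCore f s ↔ ∀ n, f^[n] x ∈ s := mem_iInter

lemma mapsTo_invariantCore : MapsTo f (invariantCore f s) (invariantCore f s) := fun _ hx =>
  mem_invariantCore.2 fun n => mem_invariantCore.1 hx (n + 1)

lemma iterate_eq_of_mem_invariantCore (hfg : EqOn f g s) (hx : x ∈ invariantCore f s) (n : ℕ) :
    f^[n] x = g^[n] x := by
  induction n with
  | zero => rfl
  | succ n ih =>
    rw [iterate_succ_apply', iterate_succ_apply', ← ih, hfg (mem_invariantCore.1 hx n)]

lemma ae_mem_invariantCore [MeasurableSpace α] {μ : Measure α}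
    (hf : Measure.QuasiMeasurePreserving f μ μ) (hs : ∀ᵐ x ∂μ, x ∈ s) :
    ∀ᵐ x ∂μ, x ∈ invariantCore f s := by
  simp only [mem_invariantCore]
  exact ae_all_iff.2 fun n => (hf.iterate n).ae hs

lemma iterate_apply_iterate_of_leftInvOn (h : LeftInvOn g f s) {k : ℕ}
    (hx : ∀ i < k, f^[i] x ∈ s) : g^[k] (f^[k] x) = x := by
  induction k with
  | zero => rfl
  | succ k ih =>
    rw [iterate_succ_apply, iterate_succ_apply', h (hx k k.lt_succ_self)]
    exact ih fun i hi => hx i (hi.trans k.lt_succ_self)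

end InvariantCore

lemma exists_isInverseBranch_pow {T : ℝ → ℝ} {X : Set ℝ} {ρ C : ℝ} (hρ : ρ < 1) (hC : 0 ≤ C)
    (hT : MapsTo T X X)
    (hjump : ∀ x ∈ X, ∃ m ≠ 0, ∃ f, IsInverseBranch T m f (Ioo 0 1) ρ C ∧ f (T^[m] x) = x)
    (n : ℕ) {x : ℝ} (hx : x ∈ X) :
    ∃ m ≥ n, ∃ f, IsInverseBranch T m f (Ioo 0 1) (ρ ^ n) (C / (1 - ρ)) ∧ f (T^[m] x) = x := by
  have hC' : 0 ≤ C / (1 - ρ) := div_nonneg hC (sub_pos.2 hρ).le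
  induction n with
  | zero => exact ⟨0, le_rfl, id, by simpa using IsInverseBranch.id T hC', rfl⟩
  | succ n ih =>
    obtain ⟨m, hm, f, hf, hfx⟩ := ih
    obtain ⟨p, hp, g, hg, hgx⟩ := hjump _ (hT.iterate m hx)
    refine ⟨p + m, by omega, f ∘ g, ?_, ?_⟩
    · have hgeom : C / (1 - ρ) * ρ + C = C / (1 - ρ) := by
        field_simp [(sub_pos.2 hρ).ne']
        ring
      simpa only [hgeom, ← pow_succ] using hf.comp hg hC' (convex_Ioo 0 1) hg.mapsTo
    · rw [iterate_add_apply, comp_apply, hgx, hfx]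

/-! ### Markov maps with a neutral branch -/

/-- A Markov map of `Ioo 0 1` with full branches on the intervals `Ioo (l i) (r i)` and bounded
distortion, expanding by a factor `Λ` on every branch except the leftmost one `i₀`. That branch is
only required not to contract and to move points to the right, so that `0` may be an indifferent
fixed point. Nothing is assumed about `T` off the branch intervals, which need only exhaust
`Ioo 0 1` up to a null set. -/
structure IsNeutralMarkovMap {ι : Type*} (T : ℝ → ℝ) (l r : ι → ℝ) (i₀ : ι) (Λ K : ℝ) :
    Prop where
  Ioo_subset : ∀ i, Ioo (l i) (r i) ⊆ Ioo 0 1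
  volume_diff_iUnion : volume (Ioo 0 1 \ ⋃ i, Ioo (l i) (r i)) = 0
  bijOn : ∀ i, BijOn T (Ioo (l i) (r i)) (Ioo 0 1)
  differentiableAt : ∀ i, ∀ x ∈ Ioo (l i) (r i), DifferentiableAt ℝ T x
  one_lt : 1 < Λ
  le_abs_deriv : ∀ i ≠ i₀, ∀ x ∈ Ioo (l i) (r i), Λ ≤ |deriv T x|
  nonneg : 0 ≤ K
  abs_log_deriv_sub_le : ∀ i, ∀ x ∈ Ioo (l i) (r i), ∀ y ∈ Ioo (l i) (r i),
    |log (deriv T x) - log (deriv T y)| ≤ K * |T x - T y|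
  one_le_deriv : ∀ x ∈ Ioo (l i₀) (r i₀), 1 ≤ deriv T x
  lt_apply : ∀ x ∈ Ioo (l i₀) (r i₀), x < T x
  right_lt_one : r i₀ < 1
  right_le_left : ∀ i ≠ i₀, r i₀ ≤ l i

namespace IsNeutralMarkovMap

variable {ι : Type*} {T F : ℝ → ℝ} {l r : ι → ℝ} {i₀ : ι} {Λ K x : ℝ}

protected lemma congr (h : IsNeutralMarkovMap T l r i₀ Λ K)
    (hTF : EqOn T F (⋃ i, Ioo (l i) (r i))) : IsNeutralMarkovMap F l r i₀ Λ K := by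
  have heq : ∀ i, ∀ x ∈ Ioo (l i) (r i), T x = F x := fun i x hx => hTF (mem_iUnion_of_mem i hx)
  have hnhds : ∀ i, ∀ x ∈ Ioo (l i) (r i), T =ᶠ[𝓝 x] F := fun i x hx =>
    mem_of_superset (isOpen_Ioo.mem_nhds hx) (heq i)
  have hderiv : ∀ i, ∀ x ∈ Ioo (l i) (r i), deriv T x = deriv F x := fun i x hx =>
    (hnhds i x hx).deriv_eq
  exact
    { h with
      bijOn i := (h.bijOn i).congr (heq i)
      differentiableAt i x hx := (hnhds i x hx).differentiableAt_iff.1 (h.differentiableAt i x hx)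
      le_abs_deriv i hi x hx := hderiv i x hx ▸ h.le_abs_deriv i hi x hx
      abs_log_deriv_sub_le i x hx y hy := by
        rw [← hderiv i x hx, ← hderiv i y hy, ← heq i x hx, ← heq i y hy]
        exact h.abs_log_deriv_sub_le i x hx y hy
      one_le_deriv x hx := hderiv i₀ x hx ▸ h.one_le_deriv x hx
      lt_apply x hx := heq i₀ x hx ▸ h.lt_apply x hx }

lemma iUnion_Ioo_subset (h : IsNeutralMarkovMap T l r i₀ Λ K) :
    ⋃ i, Ioo (l i) (r i) ⊆ Ioo 0 1 := iUnion_subset h.Ioo_subset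

lemma ae_mem_iUnion_Ioo (h : IsNeutralMarkovMap T l r i₀ Λ K) :
    ∀ᵐ x ∂volume.restrict (Ioo 0 1), x ∈ ⋃ i, Ioo (l i) (r i) := by
  rw [ae_restrict_iff' measurableSet_Ioo]
  filter_upwards [measure_eq_zero_iff_ae_notMem.1 h.volume_diff_iUnion] with x hx hx01
  exact not_not.1 fun hxU => hx ⟨hx01, hxU⟩

lemma invariantCore_subset (h : IsNeutralMarkovMap T l r i₀ Λ K) :
    invariantCore T (⋃ i, Ioo (l i) (r i)) ⊆ Ioo 0 1 := fun _ hx =>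
  h.iUnion_Ioo_subset (mem_invariantCore.1 hx 0)

lemma continuousOn (h : IsNeutralMarkovMap T l r i₀ Λ K) :
    ContinuousOn T (⋃ i, Ioo (l i) (r i)) := fun x hx =>
  have ⟨i, hxi⟩ := mem_iUnion.1 hx
  (h.differentiableAt i x hxi).continuousAt.continuousWithinAt

lemma isInverseBranch_invFunOn (h : IsNeutralMarkovMap T l r i₀ Λ K) {i : ι} {c : ℝ} (hc : 0 < c)
    (hexp : ∀ x ∈ Ioo (l i) (r i), c ≤ |deriv T x|) :
    IsInverseBranch T 1 (invFunOn T (Ioo (l i) (r i))) (Ioo 0 1) c⁻¹ K where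
  toBoundedDistortionOn := .invFunOn (convex_Ioo _ _) isOpen_Ioo (h.bijOn i)
    (h.differentiableAt i) hc hexp (h.abs_log_deriv_sub_le i)
  mapsTo := (h.bijOn i).surjOn.mapsTo_invFunOn.mono_right (h.Ioo_subset i)
  leftInvOn := (h.bijOn i).surjOn.rightInvOn_invFunOn

lemma isInverseBranch_invFunOn_neutral (h : IsNeutralMarkovMap T l r i₀ Λ K) :
    IsInverseBranch T 1 (invFunOn T (Ioo (l i₀) (r i₀))) (Ioo 0 1) 1 K := by
  simpa only [inv_one] using h.isInverseBranch_invFunOn one_pos fun x hx =>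
    (h.one_le_deriv x hx).trans (le_abs_self _)

lemma strictMonoOn_neutral (h : IsNeutralMarkovMap T l r i₀ Λ K) :
    StrictMonoOn T (Ioo (l i₀) (r i₀)) := by
  refine strictMonoOn_of_deriv_pos (convex_Ioo _ _)
    (h.continuousOn.mono (subset_iUnion (fun i => Ioo (l i) (r i)) i₀)) fun x hx => ?_
  rw [interior_Ioo] at hx
  exact one_pos.trans_le (h.one_le_deriv x hx)

lemma monotoneOn_invFunOn_neutral (h : IsNeutralMarkovMap T l r i₀ Λ K) :
    MonotoneOn (invFunOn T (Ioo (l i₀) (r i₀))) (Ioo 0 1) := by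
  have hsurj := (h.bijOn i₀).surjOn
  intro x hx y hy hxy
  refine (h.strictMonoOn_neutral.le_iff_le (hsurj.mapsTo_invFunOn hx)
    (hsurj.mapsTo_invFunOn hy)).1 ?_
  rwa [hsurj.rightInvOn_invFunOn hx, hsurj.rightInvOn_invFunOn hy]

lemma exists_isInverseBranch_iterate_neutral (h : IsNeutralMarkovMap T l r i₀ Λ K) :
    ∃ C, 0 ≤ C ∧ ∀ k,
      IsInverseBranch T k (invFunOn T (Ioo (l i₀) (r i₀)))^[k] (Ioo (r i₀) 1) 1 C := by
  set g := invFunOn T (Ioo (l i₀) (r i₀))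
  have hg : IsInverseBranch T 1 g (Ioo 0 1) 1 K := h.isInverseBranch_invFunOn_neutral
  have hgmem : MapsTo g (Ioo 0 1) (Ioo (l i₀) (r i₀)) := (h.bijOn i₀).surjOn.mapsTo_invFunOn
  have hr : 0 < r i₀ := by
    have hmid := hgmem (show (1 / 2 : ℝ) ∈ Ioo 0 1 by norm_num)
    exact (h.Ioo_subset i₀ hmid).1.trans hmid.2
  have hJ : Ioo (r i₀) 1 ⊆ Ioo 0 1 := Ioo_subset_Ioo_left hr.le
  obtain ⟨C, hC, hdist⟩ := hg.exists_iterate h.nonneg (convex_Ioo 0 1) Ioo_subset_Icc_self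
    hg.mapsTo h.monotoneOn_invFunOn_neutral hJ (convex_Ioo _ _)
    (Ioo_infinite h.right_lt_one).nontrivial
    fun x hx y hy => ((hgmem (hJ hx)).2.trans hy.1).le
  exact ⟨C, hC, fun k => ⟨hdist k, (hg.mapsTo.iterate k).mono_left hJ, fun y hy =>
    iterate_apply_iterate_of_leftInvOn hg.leftInvOn fun i _ => hg.mapsTo.iterate i (hJ hy)⟩⟩

/-- Otherwise the supremum `L` of the orbit lies in `Ioo 0 1`; its preimage `z < L` on the neutral
branch is passed at some time, and at the next step so is `L`. -/
lemma exists_iterate_notMem_neutral (h : IsNeutralMarkovMap T l r i₀ Λ K) (x : ℝ) :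
    ∃ k, T^[k] x ∉ Ioo (l i₀) (r i₀) := by
  by_contra! hstay
  have hbdd : BddAbove (range fun k => T^[k] x) := ⟨r i₀, by
    rintro _ ⟨k, rfl⟩
    exact (hstay k).2.le⟩
  set L := ⨆ k, T^[k] x
  have hle : ∀ k, T^[k] x ≤ L := le_ciSup hbdd
  have hL : L ∈ Ioo (0 : ℝ) 1 :=
    ⟨(h.Ioo_subset i₀ (hstay 0)).1.trans_le (hle 0),
      (ciSup_le fun k => (hstay k).2.le).trans_lt h.right_lt_one⟩
  obtain ⟨z, hz, hzL⟩ := (h.bijOn i₀).surjOn hL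
  obtain ⟨k, hk⟩ := exists_lt_of_lt_ciSup (hzL ▸ h.lt_apply z hz : z < L)
  have hpass : L < T^[k + 1] x := by
    simpa only [iterate_succ_apply', hzL] using h.strictMonoOn_neutral hz (hstay k) hk
  exact (hle (k + 1)).not_gt hpass

lemma exists_isInverseBranch_jump (h : IsNeutralMarkovMap T l r i₀ Λ K) :
    ∃ C, 0 ≤ C ∧ ∀ x ∈ invariantCore T (⋃ i, Ioo (l i) (r i)), ∃ m ≠ 0, ∃ f,
      IsInverseBranch T m f (Ioo 0 1) Λ⁻¹ C ∧ f (T^[m] x) = x := by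
  obtain ⟨C, hC, hneutral⟩ := h.exists_isInverseBranch_iterate_neutral
  have hΛ : 0 < Λ := one_pos.trans h.one_lt
  refine ⟨C * Λ⁻¹ + K, add_nonneg (by positivity) h.nonneg, fun x hx => ?_⟩
  classical
  have hexit := h.exists_iterate_notMem_neutral x
  obtain ⟨k, hk, hbefore⟩ : ∃ k, T^[k] x ∉ Ioo (l i₀) (r i₀) ∧
      ∀ i < k, T^[i] x ∈ Ioo (l i₀) (r i₀) :=
    ⟨Nat.find hexit, Nat.find_spec hexit, fun i hi => not_not.1 (Nat.find_min hexit hi)⟩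
  obtain ⟨j, hj⟩ := mem_iUnion.1 (mem_invariantCore.1 hx k)
  have hji : j ≠ i₀ := fun hji => hk (hji ▸ hj)
  have hjump := h.isInverseBranch_invFunOn hΛ (h.le_abs_deriv j hji)
  have hmaps : MapsTo (invFunOn T (Ioo (l j) (r j))) (Ioo 0 1) (Ioo (r i₀) 1) := fun y hy =>
    ⟨(h.right_le_left j hji).trans_lt ((h.bijOn j).surjOn.mapsTo_invFunOn hy).1,
      (hjump.mapsTo hy).2⟩
  refine ⟨1 + k, by omega, _,
    by simpa only [one_mul] using (hneutral k).comp hjump hC (convex_Ioo 0 1) hmaps, ?_⟩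
  rw [iterate_add_apply, iterate_one, comp_apply, (h.bijOn j).injOn.leftInvOn_invFunOn hj]
  exact iterate_apply_iterate_of_leftInvOn (h.bijOn i₀).injOn.leftInvOn_invFunOn hbefore

lemma quasiMeasurePreserving [Countable ι] (h : IsNeutralMarkovMap T l r i₀ Λ K)
    (hT : Measurable T) :
    Measure.QuasiMeasurePreserving T (volume.restrict (Ioo 0 1)) (volume.restrict (Ioo 0 1)) := by
  refine ⟨hT, Measure.AbsolutelyContinuous.mk fun s hs hs0 => ?_⟩
  rw [Measure.restrict_apply hs] at hs0
  rw [Measure.map_apply hT hs, Measure.restrict_apply (hT hs)]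
  have hcover : T ⁻¹' s ∩ Ioo 0 1 ⊆ (Ioo 0 1 \ ⋃ i, Ioo (l i) (r i)) ∪
      ⋃ i, invFunOn T (Ioo (l i) (r i)) '' (s ∩ Ioo 0 1) := by
    rintro x ⟨hxs, hx⟩
    by_cases hxU : x ∈ ⋃ i, Ioo (l i) (r i)
    · obtain ⟨i, hxi⟩ := mem_iUnion.1 hxU
      exact .inr (mem_iUnion_of_mem i ⟨T x, ⟨hxs, (h.bijOn i).mapsTo hxi⟩,
        (h.bijOn i).injOn.leftInvOn_invFunOn hxi⟩)
    · exact .inl ⟨hx, hxU⟩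
  refine measure_mono_null hcover (measure_union_null h.volume_diff_iUnion
    (measure_iUnion_null fun i => ?_))
  have hbranch : ∃ c, IsInverseBranch T 1 (invFunOn T (Ioo (l i) (r i))) (Ioo 0 1) c K := by
    obtain rfl | hi := eq_or_ne i i₀
    · exact ⟨1, h.isInverseBranch_invFunOn_neutral⟩
    · exact ⟨_, h.isInverseBranch_invFunOn (one_pos.trans h.one_lt) (h.le_abs_deriv i hi)⟩
  obtain ⟨c, hc⟩ := hbranch
  exact addHaar_image_eq_zero_of_differentiableOn_of_addHaar_eq_zero volume
    (fun y hy => (hc.differentiableAt y hy.2).differentiableWithinAt) hs0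

protected lemma conservative [Countable ι] (h : IsNeutralMarkovMap T l r i₀ Λ K)
    (hT : Measurable T) : Conservative T (volume.restrict (Ioo 0 1)) := by
  obtain ⟨C, hC, hjump⟩ := h.exists_isInverseBranch_jump
  have hΛ0 : 0 ≤ Λ⁻¹ := inv_nonneg.2 (one_pos.trans h.one_lt).le
  have hΛ1 : Λ⁻¹ < 1 := inv_lt_one_of_one_lt₀ h.one_lt
  have hq := h.quasiMeasurePreserving hT
  refine conservative_of_forall_exists_isInverseBranch hq
    (C := C / (1 - Λ⁻¹)) (div_nonneg hC (sub_pos.2 hΛ1).le) ?_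
  filter_upwards [ae_mem_invariantCore hq h.ae_mem_iUnion_Ioo] with x hx ε hε
  obtain ⟨n, hn⟩ := exists_pow_lt_of_lt_one hε hΛ1
  obtain ⟨m, hm, f, hf, hfx⟩ := exists_isInverseBranch_pow hΛ1 hC mapsTo_invariantCore hjump
    (n + 1) hx
  exact ⟨m, by omega, f, _, (pow_le_pow_of_le_one hΛ0 hΛ1.le n.le_succ).trans_lt hn, hf, _,
    h.invariantCore_subset (mapsTo_invariantCore.iterate m hx), hfx⟩

end IsNeutralMarkovMap

theorem conservative_of_intervalMapSetup_general {ι : Type*} [Countable ι] {T : ℝ → ℝ}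
    {l r : ι → ℝ} {i₀ : ι} {Λ K : ℝ} (h : IsNeutralMarkovMap T l r i₀ Λ K)
    {A : Set ℝ} (hA : A ⊆ Icc 0 1) (hAm : MeasurableSet A) :
    volume {x ∈ A | ¬ ∀ N : ℕ, ∃ n : ℕ, N ≤ n ∧ T^[n + 1] x ∈ A} = 0 := by
  set U := ⋃ i, Ioo (l i) (r i)
  have hUm : MeasurableSet U := (isOpen_iUnion fun i => isOpen_Ioo).measurableSet
  have hTF : EqOn (U.indicator T) T U := eqOn_indicator
  have hF : Measurable (U.indicator T) := by
    classical
    rw [← piecewise_eq_indicator]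
    exact h.continuousOn.measurable_piecewise continuousOn_const hUm
  have hcons := (h.congr hTF.symm).conservative hF
  have hcore := ae_mem_invariantCore hcons.toQuasiMeasurePreserving h.ae_mem_iUnion_Ioo
  have hreturn := hcons.ae_mem_imp_frequently_image_mem hAm.nullMeasurableSet
  rw [restrict_Ioo_eq_restrict_Icc, ae_restrict_iff' measurableSet_Icc] at hcore hreturn
  refine measure_eq_zero_iff_ae_notMem.2 ?_
  filter_upwards [hcore, hreturn] with x hxU hxA ⟨hx, hfinite⟩
  refine hfinite fun N => ?_
  obtain ⟨n, hn, hnA⟩ := frequently_atTop.1 (hxA (hA hx) hx) (N + 1)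
  obtain ⟨m, rfl⟩ := Nat.exists_eq_add_of_lt hn
  rw [iterate_eq_of_mem_invariantCore hTF (hxU (hA hx))] at hnA
  exact ⟨N + m, N.le_add_right m, hnA⟩

/-! ### Smooth interval maps with (A1)–(A4) -/

lemma bijOn_Ioo_of_bijOn_Icc {α β : Type*} [ConditionallyCompleteLinearOrder α]
    [TopologicalSpace α] [OrderTopology α] [DenselyOrdered α] [LinearOrder β] [TopologicalSpace β]
    [OrderClosedTopology β] {f : α → β} {a b : α} {c d : β} (hab : a ≤ b)
    (hf : ContinuousOn f (Icc a b)) (h : BijOn f (Icc a b) (Icc c d)) :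
    BijOn f (Ioo a b) (Ioo c d) := by
  have hcd : c ≤ d := nonempty_Icc.1 (h.image_eq ▸ (nonempty_Icc.2 hab).image f)
  have hleast : IsLeast (f '' Icc a b) c := h.image_eq ▸ isLeast_Icc hcd
  have hgreatest : IsGreatest (f '' Icc a b) d := h.image_eq ▸ isGreatest_Icc hcd
  have hinj : InjOn f (Ioo a b) := h.injOn.mono Ioo_subset_Icc_self
  obtain hmono | hanti := hf.strictMonoOn_of_injOn_Icc' hab h.injOn
  · rw [hleast.unique (hmono.monotoneOn.map_isLeast (isLeast_Icc hab)),
      hgreatest.unique (hmono.monotoneOn.map_isGreatest (isGreatest_Icc hab))]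
    exact ⟨hmono.mapsTo_Ioo, hinj, intermediate_value_Ioo hab hf⟩
  · rw [hleast.unique (hanti.antitoneOn.map_isGreatest (isGreatest_Icc hab)),
      hgreatest.unique (hanti.antitoneOn.map_isLeast (isLeast_Icc hab))]
    exact ⟨hanti.mapsTo_Ioo, hinj, intermediate_value_Ioo' hab hf⟩

lemma abs_log_deriv_sub_le_of_abs_div_sq_le {f f' f'' : ℝ → ℝ} {D : Set ℝ} {K x y : ℝ}
    (hD : D.OrdConnected) (hf : ∀ z ∈ D, HasDerivAt f (f' z) z)
    (hf' : ∀ z ∈ D, HasDerivAt f' (f'' z) z) (hne : ∀ z ∈ D, f' z ≠ 0)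
    (hK : ∀ z ∈ D, |f'' z| / f' z ^ 2 ≤ K) (hx : x ∈ D) (hy : y ∈ D) :
    |log (f' x) - log (f' y)| ≤ K * |f x - f y| := by
  wlog hxy : x < y generalizing x y
  · obtain rfl | hyx := (not_lt.1 hxy).eq_or_lt
    · simp
    · simpa only [abs_sub_comm] using this hy hx hyx
  have hsub : Icc x y ⊆ D := hD.out hx hy
  have hlog : ∀ z ∈ D, HasDerivAt (fun z => log (f' z)) (f'' z / f' z) z := fun z hz =>
    (hf' z hz).log (hne z hz)
  obtain ⟨c, hc, hratio⟩ := exists_ratio_hasDerivAt_eq_ratio_slope f f' hxy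
    (fun z hz => (hf z (hsub hz)).continuousAt.continuousWithinAt)
    (fun z hz => hf z (hsub (Ioo_subset_Icc_self hz))) (fun z => log (f' z)) (fun z => f'' z / f' z)
    (fun z hz => (hlog z (hsub hz)).continuousAt.continuousWithinAt)
    (fun z hz => hlog z (hsub (Ioo_subset_Icc_self hz)))
  have hcD : c ∈ D := hsub (Ioo_subset_Icc_self hc)
  have hslope : log (f' x) - log (f' y) = f'' c / f' c ^ 2 * (f x - f y) := by
    have := hne c hcD
    field_simp at hratio ⊢
    linarith
  rw [hslope, abs_mul, abs_div, abs_sq]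
  exact mul_le_mul_of_nonneg_right (hK c hcD) (abs_nonneg _)

namespace IntervalMapSetup

variable (S : IntervalMapSetup) {j : ℕ} {x : ℝ}

lemma hasDerivAt_branch (hx : x ∈ Ioo (S.a j) (S.a (j + 1))) :
    HasDerivAt (S.φ j) (S.φd j x) x :=
  (S.hφ_d j x (Ioo_subset_Icc_self hx)).hasDerivAt (Icc_mem_nhds hx.1 hx.2)

lemma hasDerivAt (hx : x ∈ Ioo (S.a j) (S.a (j + 1))) : HasDerivAt S.T (S.φd j x) x :=
  (S.hasDerivAt_branch hx).congr_of_eventuallyEq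
    (mem_of_superset (isOpen_Ioo.mem_nhds hx) (S.hT_eq j))

lemma continuousOn_branch (j : ℕ) : ContinuousOn (S.φ j) (Icc (S.a j) (S.a (j + 1))) :=
  fun x hx => (S.hφ_d j x hx).continuousWithinAt

lemma a_nonneg (j : ℕ) : 0 ≤ S.a j := S.ha0 ▸ S.ha_mono.monotone j.zero_le

lemma one_lt_branchDeriv_zero (hx : x ∈ Ioo (S.a 0) (S.a 1)) : 1 < S.φd 0 x :=
  S.hA4_exp x (S.ha0 ▸ hx.1) hx.2.le

lemma branchDeriv_ne_zero (hx : x ∈ Ioo (S.a j) (S.a (j + 1))) : S.φd j x ≠ 0 := by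
  obtain rfl | hj := Nat.eq_zero_or_pos j
  · exact (one_pos.trans (S.one_lt_branchDeriv_zero hx)).ne'
  · exact abs_pos.1 ((one_pos.trans S.hΛ).trans_le (S.hA2 j hj x (Ioo_subset_Icc_self hx)))

lemma Ioo_sdiff_iUnion_Ioo_subset : Ioo 0 1 \ ⋃ j, Ioo (S.a j) (S.a (j + 1)) ⊆ range S.a := by
  rintro x ⟨hx, hxU⟩
  by_contra hxa
  have hexists : ∃ j, x < S.a j := (S.ha_lim.eventually_const_lt hx.2).exists
  obtain ⟨j, hj⟩ : ∃ j, Nat.find hexists = j + 1 := Nat.exists_eq_succ_of_ne_zero fun h0 =>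
    (S.ha0 ▸ h0 ▸ Nat.find_spec hexists).not_gt hx.1
  have hle : S.a j ≤ x := not_lt.1 (Nat.find_min hexists (by omega))
  exact hxU (mem_iUnion_of_mem j ⟨hle.lt_of_ne fun h => hxa ⟨j, h⟩, hj ▸ Nat.find_spec hexists⟩)

lemma lt_apply (hx : x ∈ Ioo (S.a 0) (S.a 1)) : x < S.T x := by
  have hx0 : 0 < x := S.ha0 ▸ hx.1
  have hsub : Ioo 0 x ⊆ Ioo (S.a 0) (S.a 1) := Ioo_subset_Ioo S.ha0.le hx.2.le
  obtain ⟨c, hc, hslope⟩ := exists_hasDerivAt_eq_slope (S.φ 0) (S.φd 0) hx0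
    ((S.continuousOn_branch 0).mono (Icc_subset_Icc S.ha0.le hx.2.le))
    fun z hz => S.hasDerivAt_branch (hsub hz)
  have hexp := S.one_lt_branchDeriv_zero (hsub hc)
  rwa [hslope, S.hA4_fix, sub_zero, sub_zero, one_lt_div hx0, ← S.hT_eq 0 x hx] at hexp

lemma isNeutralMarkovMap :
    IsNeutralMarkovMap S.T S.a (fun j => S.a (j + 1)) 0 S.Λ S.K where
  Ioo_subset j := Ioo_subset_Ioo (S.a_nonneg j) (S.ha_lt (j + 1)).le
  volume_diff_iUnion := measure_mono_null S.Ioo_sdiff_iUnion_Ioo_subset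
    ((countable_range S.a).measure_zero volume)
  bijOn j := (bijOn_Ioo_of_bijOn_Icc (S.ha_mono j.lt_succ_self).le (S.continuousOn_branch j)
    (S.hφ_bij j)).congr fun x hx => (S.hT_eq j x hx).symm
  differentiableAt _ _ hx := (S.hasDerivAt hx).differentiableAt
  one_lt := S.hΛ
  le_abs_deriv j hj x hx := by
    rw [(S.hasDerivAt hx).deriv]
    exact S.hA2 j (Nat.one_le_iff_ne_zero.2 hj) x (Ioo_subset_Icc_self hx)
  nonneg := S.hK.le
  abs_log_deriv_sub_le j x hx y hy := by
    rw [(S.hasDerivAt hx).deriv, (S.hasDerivAt hy).deriv]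
    exact abs_log_deriv_sub_le_of_abs_div_sq_le ordConnected_Ioo (fun z => S.hasDerivAt)
      (fun z hz => (S.hφ_dd j z (Ioo_subset_Icc_self hz)).hasDerivAt (Icc_mem_nhds hz.1 hz.2))
      (fun z => S.branchDeriv_ne_zero) (fun z hz => S.hA3 j z (Ioo_subset_Icc_self hz)) hx hy
  one_le_deriv x hx := (S.hasDerivAt hx).deriv ▸ (S.one_lt_branchDeriv_zero hx).le
  lt_apply x hx := S.lt_apply hx
  right_lt_one := S.ha_lt 1
  right_le_left j hj := S.ha_mono.monotone (Nat.one_le_iff_ne_zero.2 hj)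

end IntervalMapSetup

/-- a Markov interval map satisfying (A1)–(A4) is conservative w.r.t.
Lebesgue measure: for every Borel `A ⊆ [0,1]` of positive measure, almost every
point of `A` returns to `A` infinitely often. -/
theorem conservative_of_intervalMapSetup (S : IntervalMapSetup) :
    ∀ A : Set ℝ, A ⊆ Set.Icc 0 1 → MeasurableSet A → 0 < volume A →
      volume {x ∈ A | ¬ ∀ N : ℕ, ∃ n : ℕ, N ≤ n ∧ S.T^[n + 1] x ∈ A} = 0 :=
  fun _ hA hAm _ => conservative_of_intervalMapSetup_general S.isNeutralMarkovMap hA hAm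
end

section
/- Let T : [0,1] → [0,1] be a Markov interval map satisfying hypotheses (A1)–(A4). Then T is ergodic with respect to Lebesgue measure: every Borel set A with T^{-1}A = A (mod Lebesgue-null sets) satisfies Leb(A) = 0 or Leb([0,1] \ A) = 0. -/
open MeasureTheory Set Filter

/-!
An inverse branch acts on densities by its transfer operator, and the bound on `φ'' / φ' ^ 2` makes
this operator increase the Lipschitz constant of the logarithm of a density by at most an additive
constant; on an expanding branch the old constant is moreover multiplied by a factor `r < 1`. The
neutral branch does not contract, but it can be jumped over: almost every orbit eventually takes an
expanding branch, so mass is preserved if one sums over all `k` the operators of `k` neutral inverse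
branches after one expanding inverse branch. Since the neutral inverse branch is concave, the
lengths of the iterates of an interval away from `0` are summable, so the distortion of its iterates
is bounded uniformly in `k`, and each jump maps log-Lipschitz constants `c` to `r * c + M`.

An invariant set of positive measure captures a fixed fraction of the mass of every density with
log-Lipschitz constant at most some `C > M / (1 - r)`. Invariance carries this, with the same
fraction, backwards along the jumps, hence to all log-Lipschitz constants. If the complement had
positive measure, densities concentrated on a closed subset of it would contradict this.
-/

open scoped ENNReal NNReal symmDiff Topology

/-! ### Log-Lipschitz densities -/

section LogLipschitz

variable {X : Type*} [PseudoMetricSpace X] {s : Set X} {c : ℝ} {h : X → ℝ≥0∞}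

/-- `log h` is finite and `c`-Lipschitz on `s`, written multiplicatively so that `h` may also vanish
identically on `s`. These are the densities on which the transfer operators act. -/
structure IsLogLipschitzOn (c : ℝ) (h : X → ℝ≥0∞) (s : Set X) : Prop where
  ne_top : ∀ x ∈ s, h x ≠ ∞
  le_exp_mul : ∀ x ∈ s, ∀ y ∈ s, h x ≤ ENNReal.ofReal (Real.exp (c * dist x y)) * h y

lemma IsLogLipschitzOn.mono {c' : ℝ} (hh : IsLogLipschitzOn c h s) (hc : c ≤ c') :
    IsLogLipschitzOn c' h s where
  ne_top := hh.ne_top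
  le_exp_mul x hx y hy := (hh.le_exp_mul x hx y hy).trans (by gcongr)

lemma isLogLipschitzOn_exp_neg_mul_infDist (hc : 0 ≤ c) (F : Set X) :
    IsLogLipschitzOn c (fun x ↦ ENNReal.ofReal (Real.exp (-(c * Metric.infDist x F)))) s where
  ne_top _ _ := ENNReal.ofReal_ne_top
  le_exp_mul x _ y _ := by
    rw [← ENNReal.ofReal_mul (Real.exp_pos _).le, ← Real.exp_add]
    have hdist : c * Metric.infDist y F ≤ c * (Metric.infDist x F + dist x y) :=
      mul_le_mul_of_nonneg_left (dist_comm y x ▸ Metric.infDist_le_infDist_add_dist) hc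
    exact ENNReal.ofReal_le_ofReal (Real.exp_le_exp.2 (by linarith))

variable [MeasurableSpace X] {μ : Measure X} {A : Set X}

lemma IsLogLipschitzOn.setLIntegral_le {d : ℝ} {x : X} (hh : IsLogLipschitzOn c h s) (hc : 0 ≤ c)
    (hd : ∀ x ∈ s, ∀ y ∈ s, dist x y ≤ d) (hs : MeasurableSet s) (hx : x ∈ s) :
    ∫⁻ y in s, h y ∂μ ≤ ENNReal.ofReal (Real.exp (c * d)) * μ s * h x :=
  calc ∫⁻ y in s, h y ∂μ
    _ ≤ ∫⁻ _ in s, ENNReal.ofReal (Real.exp (c * d)) * h x ∂μ := setLIntegral_mono' hs fun y hy ↦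
        (hh.le_exp_mul y hy x hx).trans (by gcongr; exact hd y hy x hx)
    _ = ENNReal.ofReal (Real.exp (c * d)) * μ s * h x := by rw [setLIntegral_const, mul_right_comm]

lemma IsLogLipschitzOn.setLIntegral_ne_top {d : ℝ} (hh : IsLogLipschitzOn c h s) (hc : 0 ≤ c)
    (hd : ∀ x ∈ s, ∀ y ∈ s, dist x y ≤ d) (hs : MeasurableSet s) (hsμ : μ s ≠ ∞) :
    ∫⁻ x in s, h x ∂μ ≠ ∞ := by
  rcases s.eq_empty_or_nonempty with rfl | ⟨x, hx⟩
  · simp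
  · exact ne_top_of_le_ne_top (ENNReal.mul_ne_top (ENNReal.mul_ne_top ENNReal.ofReal_ne_top hsμ)
      (hh.ne_top x hx)) (hh.setLIntegral_le hc hd hs hx)

lemma IsLogLipschitzOn.measure_mul_setLIntegral_le {d : ℝ} (hh : IsLogLipschitzOn c h s)
    (hc : 0 ≤ c) (hd : ∀ x ∈ s, ∀ y ∈ s, dist x y ≤ d) (hs : MeasurableSet s) (hsμ : μ s ≠ ∞)
    (hA : MeasurableSet A) (hAs : A ⊆ s) :
    μ A * ∫⁻ x in s, h x ∂μ ≤ ENNReal.ofReal (Real.exp (c * d)) * μ s * ∫⁻ x in A, h x ∂μ :=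
  calc μ A * ∫⁻ x in s, h x ∂μ
    _ = ∫⁻ _ in A, ∫⁻ y in s, h y ∂μ ∂μ := by rw [setLIntegral_const, mul_comm]
    _ ≤ ∫⁻ x in A, ENNReal.ofReal (Real.exp (c * d)) * μ s * h x ∂μ :=
        setLIntegral_mono' hA fun x hx ↦ hh.setLIntegral_le hc hd hs (hAs hx)
    _ = ENNReal.ofReal (Real.exp (c * d)) * μ s * ∫⁻ x in A, h x ∂μ :=
        lintegral_const_mul' _ _ (ENNReal.mul_ne_top ENNReal.ofReal_ne_top hsμ)

/-- The set `A` captures at least the fraction `θ` of the mass on `s` of every density `h` with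
`log h` `c`-Lipschitz. -/
def CapturesFraction (μ : Measure X) (s A : Set X) (θ : ℝ≥0∞) (c : ℝ) : Prop :=
  ∀ h : X → ℝ≥0∞, IsLogLipschitzOn c h s → θ * ∫⁻ x in s, h x ∂μ ≤ ∫⁻ x in A, h x ∂μ

lemma CapturesFraction.mono {θ : ℝ≥0∞} {c' : ℝ} (hA : CapturesFraction μ s A θ c) (hc : c' ≤ c) :
    CapturesFraction μ s A θ c' :=
  fun h hh ↦ hA h (hh.mono hc)

lemma capturesFraction_of_nonneg {d : ℝ} (hc : 0 ≤ c) (hd : ∀ x ∈ s, ∀ y ∈ s, dist x y ≤ d)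
    (hs : MeasurableSet s) (hsμ : μ s ≠ ∞) (hA : MeasurableSet A) (hAs : A ⊆ s) :
    CapturesFraction μ s A (μ A / (ENNReal.ofReal (Real.exp (c * d)) * μ s)) c := fun h hh ↦ by
  rw [← ENNReal.mul_div_right_comm]
  refine ENNReal.div_le_of_le_mul ?_
  rw [mul_comm (∫⁻ x in A, h x ∂μ)]
  exact hh.measure_mul_setLIntegral_le hc hd hs hsμ hA hAs

lemma tendsto_setLIntegral_exp_neg_mul_infDist [OpensMeasurableSpace X] {F : Set X}
    (hF : IsClosed F) (hFne : F.Nonempty) (hA : MeasurableSet A) (hAμ : μ A ≠ ∞)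
    (hAF : Disjoint A F) :
    Tendsto (fun n : ℕ ↦ ∫⁻ x in A, ENNReal.ofReal (Real.exp (-(n * Metric.infDist x F))) ∂μ)
      atTop (𝓝 0) := by
  rw [← lintegral_zero (μ := μ.restrict A)]
  refine tendsto_lintegral_of_dominated_convergence (fun _ ↦ 1) (fun n ↦ by fun_prop)
    (fun n ↦ Eventually.of_forall fun x ↦ ?_) (by simpa using hAμ)
    ((ae_restrict_iff' hA).2 (Eventually.of_forall fun x hx ↦ ?_))
  · rw [ENNReal.ofReal_le_one, Real.exp_le_one_iff, neg_nonpos]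
    exact mul_nonneg n.cast_nonneg Metric.infDist_nonneg
  · have hpos := (hF.notMem_iff_infDist_pos hFne).1 (disjoint_left.1 hAF hx)
    rw [← ENNReal.ofReal_zero]
    exact ENNReal.tendsto_ofReal (Real.tendsto_exp_neg_atTop_nhds_zero.comp
      (tendsto_natCast_atTop_atTop.atTop_mul_const hpos))

-- Densities peaked on a closed `F ⊆ s \ A` keep mass `μ F` on `s`, but lose all mass on `A`.
lemma measure_diff_eq_zero_of_capturesFraction [OpensMeasurableSpace X] [μ.WeaklyRegular]
    {θ : ℝ≥0∞} (hs : MeasurableSet s) (hsμ : μ s ≠ ∞) (hA : MeasurableSet A) (hAs : A ⊆ s)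
    (hθ : θ ≠ 0) (hcap : ∀ c, 0 ≤ c → CapturesFraction μ s A θ c) : μ (s \ A) = 0 := by
  by_contra hne
  obtain ⟨F, hFsub, hF, hFμ⟩ := (hs.diff hA).exists_lt_isClosed_of_ne_top
    (measure_ne_top_of_subset sdiff_subset hsμ) (pos_iff_ne_zero.2 hne)
  have hle : ∀ n : ℕ,
      θ * μ F ≤ ∫⁻ x in A, ENNReal.ofReal (Real.exp (-(n * Metric.infDist x F))) ∂μ := fun n ↦ by
    refine le_trans ?_
      (hcap n n.cast_nonneg _ (isLogLipschitzOn_exp_neg_mul_infDist n.cast_nonneg F))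
    gcongr
    calc μ F
      _ = ∫⁻ x in F, ENNReal.ofReal (Real.exp (-(n * Metric.infDist x F))) ∂μ := by
          rw [← setLIntegral_one]
          exact setLIntegral_congr_fun hF.measurableSet fun x hx ↦ by
            simp [Metric.infDist_zero_of_mem hx]
      _ ≤ _ := lintegral_mono_set fun x hx ↦ (hFsub hx).1
  have hlim := tendsto_setLIntegral_exp_neg_mul_infDist (μ := μ) hF
    (nonempty_of_measure_ne_zero hFμ.ne') hA (measure_ne_top_of_subset hAs hsμ)
    (disjoint_sdiff_right.mono_right hFsub)
  exact mul_ne_zero hθ hFμ.ne' (nonpos_iff_eq_zero.1 (ge_of_tendsto' hlim hle))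

lemma exists_iterate_affine_le {r M C : ℝ} (hr₀ : 0 ≤ r) (hr₁ : r < 1) (hC : M / (1 - r) < C)
    (x : ℝ) : ∃ n : ℕ, (fun c ↦ r * c + M)^[n] x ≤ C := by
  have hclosed : ∀ n : ℕ,
      (fun c ↦ r * c + M)^[n] x = r ^ n * (x - M / (1 - r)) + M / (1 - r) := fun n ↦ by
    have hr : 1 - r ≠ 0 := by linarith
    induction n with
    | zero => simp
    | succ n ih =>
      rw [Function.iterate_succ_apply', ih]
      field_simp
      ring
  have hlim : Tendsto (fun n : ℕ ↦ (fun c ↦ r * c + M)^[n] x) atTop (𝓝 (M / (1 - r))) := by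
    simpa only [hclosed, zero_mul, zero_add] using
      ((tendsto_pow_atTop_nhds_zero_of_lt_one hr₀ hr₁).mul_const (x - M / (1 - r))).add_const _
  exact (hlim.eventually_le_const hC).exists

-- A fraction captured by `A` at the constant `r * c + M` is also captured at `c`, and iterates of
-- `c ↦ r * c + M` bring every constant below `C > M / (1 - r)`.
theorem measure_eq_zero_or_measure_diff_eq_zero_of_transfer [OpensMeasurableSpace X]
    [μ.WeaklyRegular] {κ : Type*} (L : κ → (X → ℝ≥0∞) → X → ℝ≥0∞) {d r M : ℝ}
    (hd : ∀ x ∈ s, ∀ y ∈ s, dist x y ≤ d) (hs : MeasurableSet s) (hsμ : μ s ≠ ∞)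
    (hA : MeasurableSet A) (hAs : A ⊆ s) (hr₀ : 0 ≤ r) (hr₁ : r < 1) (hM : 0 ≤ M)
    (hL : ∀ k c h, 0 ≤ c → IsLogLipschitzOn c h s → IsLogLipschitzOn (r * c + M) (L k h) s)
    (hmass : ∀ B ∈ ({s, A} : Set (Set X)), ∀ c h, 0 ≤ c → IsLogLipschitzOn c h s →
      ∫⁻ x in B, h x ∂μ = ∑' k, ∫⁻ x in B, L k h x ∂μ) :
    μ A = 0 ∨ μ (s \ A) = 0 := by
  refine or_iff_not_imp_left.2 fun hA₀ ↦ ?_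
  set C := M / (1 - r) + 1
  have hC : 0 ≤ C := by have := sub_pos.2 hr₁; positivity
  set θ := μ A / (ENNReal.ofReal (Real.exp (C * d)) * μ s)
  have hθ : θ ≠ 0 := (ENNReal.div_pos hA₀ (by finiteness)).ne'
  have hbase : CapturesFraction μ s A θ C := capturesFraction_of_nonneg hC hd hs hsμ hA hAs
  have hstep : ∀ c, 0 ≤ c → CapturesFraction μ s A θ (r * c + M) → CapturesFraction μ s A θ c := by
    intro c hc hcap h hh
    rw [hmass s (by simp) c h hc hh, hmass A (by simp) c h hc hh, ← ENNReal.tsum_mul_left]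
    exact ENNReal.tsum_le_tsum fun k ↦ hcap _ (hL k c h hc hh)
  have hiter : ∀ (n : ℕ) (c : ℝ), 0 ≤ c → (fun c ↦ r * c + M)^[n] c ≤ C →
      CapturesFraction μ s A θ c := by
    intro n
    induction n with
    | zero => exact fun c _ hcC ↦ hbase.mono hcC
    | succ n ih => exact fun c hc hcC ↦ hstep c hc (ih _ (by positivity) hcC)
  refine measure_diff_eq_zero_of_capturesFraction hs hsμ hA hAs hθ fun c hc ↦ ?_
  obtain ⟨n, hn⟩ := exists_iterate_affine_le hr₀ hr₁ (lt_add_one (M / (1 - r))) c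
  exact hiter n c hc hn

end LogLipschitz

/-! ### Concave contractions with a parabolic fixed point -/

lemma strictMonoOn_iterate {α : Type*} [Preorder α] {f : α → α} {s : Set α}
    (hf : StrictMonoOn f s) (hmaps : MapsTo f s s) (n : ℕ) : StrictMonoOn f^[n] s := by
  induction n with
  | zero => exact strictMonoOn_id
  | succ n ih => exact ih.comp hf hmaps

section Concave

variable {𝕜 : Type*} [Field 𝕜] [LinearOrder 𝕜] [IsStrictOrderedRing 𝕜] {s : Set 𝕜} {ψ : 𝕜 → 𝕜}
  {y z : 𝕜}

lemma iterate_sub_div_iterate_sub_le_of_concaveOn (hconc : ConcaveOn 𝕜 s ψ)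
    (hmono : StrictMonoOn ψ s) (hmaps : MapsTo ψ s s) (hy : y ∈ s) (hz : z ∈ s) (hψy : ψ y < y)
    (hyz : y < z) (n : ℕ) :
    (ψ^[n] z - ψ^[n] y) / (ψ^[n] y - ψ^[n + 1] y) ≤ (z - y) / (y - ψ y) := by
  induction n with
  | zero => exact le_rfl
  | succ n ih =>
    refine le_trans ?_ ih
    have hmono' : ∀ m, StrictMonoOn ψ^[m] s := strictMonoOn_iterate hmono hmaps
    have hlt : ψ^[n + 1] y < ψ^[n] y := hmono' n (hmaps hy) hy hψy
    have hlt' : ψ^[n + 2] y < ψ^[n + 1] y := hmono' (n + 1) (hmaps hy) hy hψy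
    have hltz : ψ^[n] y < ψ^[n] z := hmono' n hy hz hyz
    have hslope := hconc.slope_anti_adjacent (hmaps.iterate (n + 1) hy) (hmaps.iterate n hz)
      hlt hltz
    simp only [← Function.iterate_succ_apply' ψ] at hslope
    rw [div_le_div_iff₀ (sub_pos.2 hltz) (sub_pos.2 hlt)] at hslope
    rw [div_le_div_iff₀ (sub_pos.2 hlt') (sub_pos.2 hlt), mul_comm (ψ^[n] z - ψ^[n] y)]
    exact hslope

lemma sum_iterate_sub_le_of_concaveOn (hconc : ConcaveOn 𝕜 s ψ) (hmono : StrictMonoOn ψ s)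
    (hmaps : MapsTo ψ s s) (hy : y ∈ s) (hz : z ∈ s) (hψy : ψ y < y) (hyz : y < z) (n : ℕ) :
    ∑ i ∈ Finset.range n, (ψ^[i] z - ψ^[i] y) ≤ (z - y) / (y - ψ y) * (y - ψ^[n] y) := by
  have htele := Finset.sum_range_sub' (fun i ↦ ψ^[i] y) n
  rw [Function.iterate_zero_apply] at htele
  rw [← htele, Finset.mul_sum]
  refine Finset.sum_le_sum fun i _ ↦ ?_
  have hlt : ψ^[i + 1] y < ψ^[i] y := strictMonoOn_iterate hmono hmaps i (hmaps hy) hy hψy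
  exact (div_le_iff₀ (sub_pos.2 hlt)).1
    (iterate_sub_div_iterate_sub_le_of_concaveOn hconc hmono hmaps hy hz hψy hyz i)

end Concave

/-- The inverse of an increasing convex branch on `[0, 1]` which expands away from the
(possibly indifferent) fixed point `0`. -/
structure IsParabolicInverse (ψ : ℝ → ℝ) : Prop where
  map_zero : ψ 0 = 0
  concaveOn : ConcaveOn ℝ (Icc 0 1) ψ
  strictMonoOn : StrictMonoOn ψ (Icc 0 1)
  lt_self : ∀ y ∈ Ioc (0 : ℝ) 1, ψ y < y

namespace IsParabolicInverse

variable {ψ : ℝ → ℝ} {p u v y : ℝ}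

lemma apply_le_self (hψ : IsParabolicInverse ψ) (hy : y ∈ Icc (0 : ℝ) 1) : ψ y ≤ y := by
  rcases hy.1.eq_or_lt with rfl | hpos
  · exact hψ.map_zero.le
  · exact (hψ.lt_self y ⟨hpos, hy.2⟩).le

lemma mapsTo (hψ : IsParabolicInverse ψ) : MapsTo ψ (Icc 0 1) (Icc 0 1) := fun _ hy ↦
  ⟨hψ.map_zero ▸ hψ.strictMonoOn.monotoneOn (left_mem_Icc.2 zero_le_one) hy hy.1,
    (hψ.apply_le_self hy).trans hy.2⟩

lemma sub_le_sub (hψ : IsParabolicInverse ψ) (hu : 0 ≤ u) (huv : u ≤ v) (hv : v ≤ 1) :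
    ψ v - ψ u ≤ v - u := by
  rcases huv.eq_or_lt with rfl | huv
  · simp
  rcases hu.eq_or_lt with rfl | hu
  · simpa [hψ.map_zero] using hψ.apply_le_self ⟨huv.le, hv⟩
  have hslope := hψ.concaveOn.slope_anti_adjacent (left_mem_Icc.2 zero_le_one)
    ⟨(hu.trans huv).le, hv⟩ hu huv
  rw [hψ.map_zero, sub_zero, sub_zero] at hslope
  exact (div_le_one (sub_pos.2 huv)).1
    (hslope.trans ((div_le_one hu).2 (hψ.apply_le_self ⟨hu.le, (huv.trans_le hv).le⟩)))

lemma lipschitzOnWith (hψ : IsParabolicInverse ψ) : LipschitzOnWith 1 ψ (Icc 0 1) := by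
  refine LipschitzOnWith.of_le_add fun u hu v hv ↦ ?_
  rcases le_total u v with huv | hvu
  · exact (hψ.strictMonoOn.monotoneOn hu hv huv).trans (le_add_of_nonneg_right dist_nonneg)
  · rw [Real.dist_eq, abs_of_nonneg (sub_nonneg.2 hvu)]
    linarith [hψ.sub_le_sub hv.1 hvu hu.2]

lemma dist_iterate_le (hψ : IsParabolicInverse ψ) (hu : u ∈ Icc (0 : ℝ) 1)
    (hv : v ∈ Icc (0 : ℝ) 1) (n : ℕ) : dist (ψ^[n] u) (ψ^[n] v) ≤ dist u v := by
  induction n with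
  | zero => exact le_rfl
  | succ n ih =>
    rw [Function.iterate_succ_apply', Function.iterate_succ_apply']
    simpa using (hψ.lipschitzOnWith.dist_le_mul _ (hψ.mapsTo.iterate n hu) _
      (hψ.mapsTo.iterate n hv)).trans (by simpa using ih)

-- By concavity each chord `ψ^[i] v - ψ^[i] u` is at most a constant times the next step of the
-- orbit of `u`, and these steps telescope.
lemma sum_dist_iterate_le (hψ : IsParabolicInverse ψ) (hp : 0 < p) (hu : u ∈ Icc p 1)
    (hv : v ∈ Icc p 1) (n : ℕ) :
    ∑ i ∈ Finset.range n, dist (ψ^[i] u) (ψ^[i] v) ≤ dist u v / (p - ψ p) := by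
  wlog huv : u ≤ v generalizing u v
  · simpa only [dist_comm] using this hv hu (le_of_not_ge huv)
  rcases huv.eq_or_lt with rfl | huv
  · simp
  have hsub : Icc p 1 ⊆ Icc 0 1 := Icc_subset_Icc_left hp.le
  have hu₀ : 0 < u := hp.trans_le hu.1
  have hψp : 0 < p - ψ p := sub_pos.2 (hψ.lt_self p ⟨hp, hu.1.trans hu.2⟩)
  have hspeed : p - ψ p ≤ u - ψ u := by linarith [hψ.sub_le_sub hp.le hu.1 hu.2]
  have hiter : u - ψ^[n] u ≤ 1 := by linarith [(hψ.mapsTo.iterate n (hsub hu)).1, hu.2]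
  calc ∑ i ∈ Finset.range n, dist (ψ^[i] u) (ψ^[i] v)
    _ = ∑ i ∈ Finset.range n, (ψ^[i] v - ψ^[i] u) := Finset.sum_congr rfl fun i _ ↦ by
        rw [dist_comm, Real.dist_eq, abs_of_pos (sub_pos.2
          (strictMonoOn_iterate hψ.strictMonoOn hψ.mapsTo i (hsub hu) (hsub hv) huv))]
    _ ≤ (v - u) / (u - ψ u) * (u - ψ^[n] u) := sum_iterate_sub_le_of_concaveOn hψ.concaveOn
        hψ.strictMonoOn hψ.mapsTo (hsub hu) (hsub hv) (hψ.lt_self u ⟨hu₀, hu.2⟩) huv n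
    _ ≤ (v - u) / (u - ψ u) := mul_le_of_le_one_right
        (div_nonneg (sub_nonneg.2 huv.le) (hψp.le.trans hspeed)) hiter
    _ ≤ dist u v / (p - ψ p) := by
        rw [dist_comm, Real.dist_eq, abs_of_pos (sub_pos.2 huv)]
        exact div_le_div_of_nonneg_left (sub_nonneg.2 huv.le) hψp hspeed

lemma tendsto_iterate_one (hψ : IsParabolicInverse ψ) :
    Tendsto (fun n ↦ ψ^[n] 1) atTop (𝓝 0) := by
  have hmem : ∀ n, ψ^[n] 1 ∈ Icc (0 : ℝ) 1 := fun n ↦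
    hψ.mapsTo.iterate n (right_mem_Icc.2 zero_le_one)
  have hanti : Antitone fun n ↦ ψ^[n] 1 := antitone_nat_of_succ_le fun n ↦ by
    rw [Function.iterate_succ_apply']
    exact hψ.apply_le_self (hmem n)
  have hlim := tendsto_atTop_ciInf hanti ⟨0, forall_mem_range.2 fun n ↦ (hmem n).1⟩
  set ℓ := ⨅ n, ψ^[n] 1
  have hℓ : ℓ ∈ Icc (0 : ℝ) 1 := isClosed_Icc.mem_of_tendsto hlim (Eventually.of_forall hmem)
  have hlim' : Tendsto (fun n ↦ ψ (ψ^[n] 1)) atTop (𝓝 (ψ ℓ)) :=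
    (hψ.lipschitzOnWith.continuousOn ℓ hℓ).tendsto.comp
      (tendsto_nhdsWithin_iff.2 ⟨hlim, Eventually.of_forall hmem⟩)
  have hfix : ψ ℓ = ℓ := tendsto_nhds_unique hlim' <| by
    simpa only [← Function.iterate_succ_apply' ψ] using (tendsto_add_atTop_iff_nat 1).2 hlim
  have hzero : ℓ = 0 := hℓ.1.eq_or_lt.elim Eq.symm fun hpos ↦
    absurd hfix (hψ.lt_self ℓ ⟨hpos, hℓ.2⟩).ne
  rwa [hzero] at hlim

end IsParabolicInverse

/-! ### Transfer operators of inverse branches -/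

/-- The transfer operator of a single inverse branch `ψ` with derivative `ψ'`: it sends the density
of a measure to the density of the pullback of that measure under `ψ`. -/
noncomputable def branchTransfer (ψ ψ' : ℝ → ℝ) (g : ℝ → ℝ≥0∞) (y : ℝ) : ℝ≥0∞ :=
  ENNReal.ofReal |ψ' y| * g (ψ y)

/-- `ψ` is an inverse branch of a full-branched map of `[0, 1]`, with derivative `ψ'` of distortion
at most `K`. -/
structure IsInverseBranch_s2 (K : ℝ) (ψ ψ' : ℝ → ℝ) : Prop where
  mapsTo : MapsTo ψ (Icc 0 1) (Icc 0 1)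
  injOn : InjOn ψ (Icc 0 1)
  hasDerivWithinAt : ∀ y ∈ Icc (0 : ℝ) 1, HasDerivWithinAt ψ (ψ' y) (Icc 0 1) y
  distortion : IsLogLipschitzOn K (fun y ↦ ENNReal.ofReal |ψ' y|) (Icc 0 1)

namespace IsInverseBranch_s2

variable {K c : ℝ} {ψ ψ' : ℝ → ℝ} {B t : Set ℝ} {g h : ℝ → ℝ≥0∞}

lemma continuousOn (hψ : IsInverseBranch_s2 K ψ ψ') : ContinuousOn ψ (Icc 0 1) :=
  fun y hy ↦ (hψ.hasDerivWithinAt y hy).continuousWithinAt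

lemma measurableSet_iterate_image (hψ : IsInverseBranch_s2 K ψ ψ') (hB : MeasurableSet B)
    (hBI : B ⊆ Icc 0 1) (n : ℕ) : MeasurableSet (ψ^[n] '' B) :=
  hB.image_of_continuousOn_injOn ((hψ.continuousOn.iterate hψ.mapsTo n).mono hBI)
    ((hψ.injOn.iterate hψ.mapsTo n).mono hBI)

lemma setLIntegral_branchTransfer (hψ : IsInverseBranch_s2 K ψ ψ') (hB : MeasurableSet B)
    (hBI : B ⊆ Icc 0 1) (g : ℝ → ℝ≥0∞) :
    ∫⁻ y in B, branchTransfer ψ ψ' g y = ∫⁻ x in ψ '' B, g x :=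
  (lintegral_image_eq_lintegral_abs_deriv_mul hB
    (fun y hy ↦ (hψ.hasDerivWithinAt y (hBI hy)).mono hBI) (hψ.injOn.mono hBI) g).symm

lemma setLIntegral_iterate_branchTransfer (hψ : IsInverseBranch_s2 K ψ ψ') (hB : MeasurableSet B)
    (hBI : B ⊆ Icc 0 1) (g : ℝ → ℝ≥0∞) (n : ℕ) :
    ∫⁻ y in B, (branchTransfer ψ ψ')^[n] g y = ∫⁻ x in ψ^[n] '' B, g x := by
  induction n generalizing g with
  | zero => simp
  | succ n ih =>
    rw [Function.iterate_succ_apply, ih, hψ.setLIntegral_branchTransfer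
      (hψ.measurableSet_iterate_image hB hBI n) ((hψ.mapsTo.iterate n).mono_left hBI).image_subset,
      image_image]
    simp only [← Function.iterate_succ_apply' ψ]

lemma branchTransfer_le (hψ : IsInverseBranch_s2 K ψ ψ') {e y z : ℝ} (hy : y ∈ Icc (0 : ℝ) 1)
    (hz : z ∈ Icc (0 : ℝ) 1) (hg : g (ψ y) ≤ ENNReal.ofReal (Real.exp e) * g (ψ z)) :
    branchTransfer ψ ψ' g y ≤
      ENNReal.ofReal (Real.exp (K * dist y z + e)) * branchTransfer ψ ψ' g z := by
  rw [Real.exp_add, ENNReal.ofReal_mul (Real.exp_pos _).le, branchTransfer, branchTransfer,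
    mul_mul_mul_comm]
  exact mul_le_mul' (hψ.distortion.le_exp_mul y hy z hz) hg

lemma isLogLipschitzOn_branchTransfer {r : ℝ≥0} (hψ : IsInverseBranch_s2 K ψ ψ')
    (hψr : LipschitzOnWith r ψ (Icc 0 1)) (hψt : MapsTo ψ (Icc 0 1) t) (hc : 0 ≤ c)
    (hg : IsLogLipschitzOn c g t) :
    IsLogLipschitzOn (r * c + K) (branchTransfer ψ ψ' g) (Icc 0 1) where
  ne_top y hy := ENNReal.mul_ne_top ENNReal.ofReal_ne_top (hg.ne_top _ (hψt hy))
  le_exp_mul y hy z hz := by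
    refine (hψ.branchTransfer_le hy hz (hg.le_exp_mul _ (hψt hy) _ (hψt hz))).trans ?_
    gcongr
    calc K * dist y z + c * dist (ψ y) (ψ z)
      _ ≤ K * dist y z + c * (r * dist y z) := by gcongr; exact hψr.dist_le_mul y hy z hz
      _ = (r * c + K) * dist y z := by ring

lemma iterate_branchTransfer_ne_top (hψ : IsInverseBranch_s2 K ψ ψ')
    (hh : ∀ y ∈ Icc (0 : ℝ) 1, h y ≠ ∞) (n : ℕ) :
    ∀ y ∈ Icc (0 : ℝ) 1, (branchTransfer ψ ψ')^[n] h y ≠ ∞ := by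
  induction n with
  | zero => exact hh
  | succ n ih =>
    intro y hy
    rw [Function.iterate_succ_apply']
    exact ENNReal.mul_ne_top ENNReal.ofReal_ne_top (ih _ (hψ.mapsTo hy))

lemma iterate_branchTransfer_le (hψ : IsInverseBranch_s2 K ψ ψ')
    (hh : IsLogLipschitzOn c h (Icc 0 1)) (n : ℕ) {u v : ℝ} (hu : u ∈ Icc (0 : ℝ) 1)
    (hv : v ∈ Icc (0 : ℝ) 1) :
    (branchTransfer ψ ψ')^[n] h u ≤ ENNReal.ofReal (Real.exp
        (K * ∑ i ∈ Finset.range n, dist (ψ^[i] u) (ψ^[i] v) + c * dist (ψ^[n] u) (ψ^[n] v))) *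
      (branchTransfer ψ ψ')^[n] h v := by
  induction n generalizing u v with
  | zero => simpa using hh.le_exp_mul u hu v hv
  | succ n ih =>
    rw [Function.iterate_succ_apply', Finset.sum_range_succ', mul_add, add_comm (K * _), add_assoc]
    exact hψ.branchTransfer_le hu hv (ih (hψ.mapsTo hu) (hψ.mapsTo hv))

lemma isLogLipschitzOn_iterate_branchTransfer (hψ : IsInverseBranch_s2 K ψ ψ')
    (hpar : IsParabolicInverse ψ) (hK : 0 ≤ K) (hc : 0 ≤ c) (hh : IsLogLipschitzOn c h (Icc 0 1))
    {p : ℝ} (hp : 0 < p) (n : ℕ) :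
    IsLogLipschitzOn (c + K / (p - ψ p)) ((branchTransfer ψ ψ')^[n] h) (Icc p 1) where
  ne_top u hu := hψ.iterate_branchTransfer_ne_top hh.ne_top n u (Icc_subset_Icc_left hp.le hu)
  le_exp_mul u hu v hv := by
    have hsub : Icc p 1 ⊆ Icc 0 1 := Icc_subset_Icc_left hp.le
    refine (hψ.iterate_branchTransfer_le hh n (hsub hu) (hsub hv)).trans ?_
    gcongr
    calc K * ∑ i ∈ Finset.range n, dist (ψ^[i] u) (ψ^[i] v) + c * dist (ψ^[n] u) (ψ^[n] v)
      _ ≤ K * (dist u v / (p - ψ p)) + c * dist u v := by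
          gcongr
          · exact hpar.sum_dist_iterate_le hp hu hv n
          · exact hpar.dist_iterate_le (hsub hu) (hsub hv) n
      _ = (c + K / (p - ψ p)) * dist u v := by ring

lemma tendsto_setLIntegral_iterate_branchTransfer (hψ : IsInverseBranch_s2 K ψ ψ')
    (hpar : IsParabolicInverse ψ) (hB : MeasurableSet B) (hBI : B ⊆ Icc 0 1)
    (hg : ∫⁻ x in Icc 0 1, g x ≠ ∞) :
    Tendsto (fun n ↦ ∫⁻ y in B, (branchTransfer ψ ψ')^[n] g y) atTop (𝓝 0) := by
  have himage : ∀ n, ψ^[n] '' B ⊆ Icc 0 (ψ^[n] 1) := fun n ↦ by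
    rintro _ ⟨y, hy, rfl⟩
    exact ⟨(hψ.mapsTo.iterate n (hBI hy)).1,
      (strictMonoOn_iterate hpar.strictMonoOn hψ.mapsTo n).monotoneOn (hBI hy)
        (right_mem_Icc.2 zero_le_one) (hBI hy).2⟩
  have hvol : Tendsto (fun n ↦ volume.restrict (Icc 0 1) (ψ^[n] '' B)) atTop (𝓝 0) := by
    refine tendsto_of_tendsto_of_tendsto_of_le_of_le tendsto_const_nhds
      (ENNReal.ofReal_zero ▸ ENNReal.tendsto_ofReal hpar.tendsto_iterate_one)
      (fun _ ↦ zero_le) fun n ↦ (Measure.restrict_apply_le _ _).trans ?_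
    simpa using measure_mono (μ := volume) (himage n)
  refine (tendsto_setLIntegral_zero hg hvol).congr fun n ↦ ?_
  rw [hψ.setLIntegral_iterate_branchTransfer hB hBI, Measure.restrict_restrict
    (hψ.measurableSet_iterate_image hB hBI n),
    inter_eq_left.2 ((hψ.mapsTo.iterate n).mono_left hBI).image_subset]

end IsInverseBranch_s2

/-! ### Inverses of smooth convex branches -/

lemma continuousOn_of_rightInvOn_of_isCompact {X Y : Type*} [TopologicalSpace X]
    [TopologicalSpace Y] [T2Space Y] {f : X → Y} {g : Y → X} {s : Set X} {t : Set Y}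
    (hs : IsCompact s) (hf : ContinuousOn f s) (hinj : InjOn f s) (hmaps : MapsTo g t s)
    (hinv : RightInvOn g f t) : ContinuousOn g t := by
  refine continuousOn_iff_isClosed.2 fun C hC ↦ ⟨f '' (s ∩ C),
    ((hs.inter_right hC).image_of_continuousOn (hf.mono inter_subset_left)).isClosed, ?_⟩
  ext y
  refine and_congr_left fun hy ↦ ⟨fun hyC ↦ ⟨g y, ⟨hmaps hy, hyC⟩, hinv hy⟩, ?_⟩
  rintro ⟨x, ⟨hxs, hxC⟩, hxy⟩
  rwa [mem_preimage, hinj (hmaps hy) hxs ((hinv hy).trans hxy.symm)]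

lemma hasDerivWithinAt_of_rightInvOn {𝕜 : Type*} [NontriviallyNormedField 𝕜] {f g : 𝕜 → 𝕜}
    {f' y : 𝕜} {s t : Set 𝕜} (hf : HasDerivWithinAt f f' s (g y)) (hf' : f' ≠ 0)
    (hg : ContinuousWithinAt g t y) (hmaps : MapsTo g t s) (hinv : RightInvOn g f t) (hy : y ∈ t) :
    HasDerivWithinAt g f'⁻¹ t y :=
  hf.hasFDerivWithinAt.of_local_left_inverse
    (f' := ContinuousLinearEquiv.unitsEquivAut 𝕜 (Units.mk0 f' hf'))
    (hg.tendsto_nhdsWithin hmaps) hy (eventually_mem_nhdsWithin.mono fun _ hz ↦ hinv hz)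

lemma concaveOn_of_rightInvOn {𝕜 : Type*} [Field 𝕜] [LinearOrder 𝕜] [IsStrictOrderedRing 𝕜]
    {f g : 𝕜 → 𝕜} {s t : Set 𝕜} (hf : ConvexOn 𝕜 s f) (hmono : StrictMonoOn f s)
    (hmaps : MapsTo g t s) (hinv : RightInvOn g f t) (ht : Convex 𝕜 t) : ConcaveOn 𝕜 t g := by
  refine ⟨ht, fun x hx y hy a b ha hb hab ↦ ?_⟩
  have hxy := ht hx hy ha hb hab
  rw [← hmono.le_iff_le (hf.1 (hmaps hx) (hmaps hy) ha hb hab) (hmaps hxy), hinv hxy]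
  simpa only [hinv hx, hinv hy] using hf.2 (hmaps hx) (hmaps hy) ha hb hab

lemma isLogLipschitzOn_of_log_le {X : Type*} [PseudoMetricSpace X] {c : ℝ} {u : X → ℝ} {s : Set X}
    (hu : ∀ x ∈ s, u x ≠ 0)
    (hlog : ∀ x ∈ s, ∀ y ∈ s, Real.log (u x) ≤ c * dist x y + Real.log (u y)) :
    IsLogLipschitzOn c (fun x ↦ ENNReal.ofReal |u x|) s where
  ne_top _ _ := ENNReal.ofReal_ne_top
  le_exp_mul x hx y hy := by
    rw [← ENNReal.ofReal_mul (Real.exp_pos _).le]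
    refine ENNReal.ofReal_le_ofReal ?_
    rw [← Real.exp_log_eq_abs (hu x hx), ← Real.exp_log_eq_abs (hu y hy), ← Real.exp_add]
    exact Real.exp_le_exp.2 (hlog x hx y hy)

section InverseBranch

variable {f f' f'' ψ : ℝ → ℝ} {s : Set ℝ} {K : ℝ}

-- `log (f' ∘ ψ)` has derivative `f'' / f' ^ 2 ∘ ψ`.
lemma isLogLipschitzOn_inv_deriv_comp
    (hψ : ∀ y ∈ Icc (0 : ℝ) 1, HasDerivWithinAt ψ (f' (ψ y))⁻¹ (Icc 0 1) y)
    (hmaps : MapsTo ψ (Icc 0 1) s) (hf' : ∀ x ∈ s, HasDerivWithinAt f' (f'' x) s x)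
    (hne : ∀ x ∈ s, f' x ≠ 0) (hK : ∀ x ∈ s, |f'' x| / f' x ^ 2 ≤ K) :
    IsLogLipschitzOn K (fun y ↦ ENNReal.ofReal |(f' (ψ y))⁻¹|) (Icc 0 1) := by
  refine isLogLipschitzOn_of_log_le (fun y hy ↦ inv_ne_zero (hne _ (hmaps hy)))
    fun y hy z hz ↦ ?_
  have hderiv : ∀ y ∈ Icc (0 : ℝ) 1, HasDerivWithinAt (fun y ↦ Real.log (f' (ψ y)))
      (f'' (ψ y) * (f' (ψ y))⁻¹ / f' (ψ y)) (Icc 0 1) y := fun y hy ↦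
    ((hf' _ (hmaps hy)).comp y (hψ y hy) hmaps).log (hne _ (hmaps hy))
  have hbound : ∀ y ∈ Icc (0 : ℝ) 1, ‖f'' (ψ y) * (f' (ψ y))⁻¹ / f' (ψ y)‖ ≤ K := fun y hy ↦ by
    convert hK _ (hmaps hy) using 1
    rw [Real.norm_eq_abs, ← div_eq_mul_inv, div_div, abs_div, ← sq, abs_sq]
  have hle := (le_abs_self _).trans
    ((convex_Icc 0 1).norm_image_sub_le_of_norm_hasDerivWithin_le hderiv hbound hy hz)
  rw [Real.log_inv, Real.log_inv, dist_comm, Real.dist_eq, ← Real.norm_eq_abs]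
  linarith

lemma isInverseBranch_of_invOn (hs : IsCompact s) (hsI : s ⊆ Icc 0 1) (hbij : BijOn f s (Icc 0 1))
    (hinv : InvOn ψ f s (Icc 0 1)) (hf : ∀ x ∈ s, HasDerivWithinAt f (f' x) s x)
    (hf' : ∀ x ∈ s, HasDerivWithinAt f' (f'' x) s x) (hne : ∀ x ∈ s, f' x ≠ 0)
    (hK : ∀ x ∈ s, |f'' x| / f' x ^ 2 ≤ K) :
    IsInverseBranch_s2 K ψ fun y ↦ (f' (ψ y))⁻¹ := by
  have hψ : BijOn ψ (Icc 0 1) s := hbij.symm hinv.symm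
  have hcont : ContinuousOn ψ (Icc 0 1) := continuousOn_of_rightInvOn_of_isCompact hs
    (fun x hx ↦ (hf x hx).continuousWithinAt) hbij.injOn hψ.mapsTo hinv.2
  have hderiv : ∀ y ∈ Icc (0 : ℝ) 1, HasDerivWithinAt ψ (f' (ψ y))⁻¹ (Icc 0 1) y := fun y hy ↦
    hasDerivWithinAt_of_rightInvOn (hf _ (hψ.mapsTo hy)) (hne _ (hψ.mapsTo hy)) (hcont y hy)
      hψ.mapsTo hinv.2 hy
  exact ⟨hψ.mapsTo.mono_right hsI, hψ.injOn, hderiv,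
    isLogLipschitzOn_inv_deriv_comp hderiv hψ.mapsTo hf' hne hK⟩

lemma isParabolicInverse_of_invOn {b : ℝ} (hf : ConvexOn ℝ (Icc 0 b) f) (hf₀ : f 0 = 0)
    (hmono : StrictMonoOn (fun x ↦ f x - x) (Icc 0 b)) (hbij : BijOn f (Icc 0 b) (Icc 0 1))
    (hinv : InvOn ψ f (Icc 0 b) (Icc 0 1)) : IsParabolicInverse ψ := by
  have hmaps : MapsTo ψ (Icc 0 1) (Icc 0 b) := (hbij.symm hinv.symm).mapsTo
  have hzero : (0 : ℝ) ∈ Icc 0 b :=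
    left_mem_Icc.2 (nonempty_Icc.1 ⟨_, hmaps (left_mem_Icc.2 zero_le_one)⟩)
  have hψ₀ : ψ 0 = 0 := by simpa only [hf₀] using hinv.1 hzero
  have hfmono : StrictMonoOn f (Icc 0 b) := by
    simpa using hmono.add (strictMonoOn_id (s := Icc 0 b))
  have hψmono : StrictMonoOn ψ (Icc 0 1) := fun y hy z hz hyz ↦
    (hfmono.lt_iff_lt (hmaps hy) (hmaps hz)).1 (by rwa [hinv.2 hy, hinv.2 hz])
  refine ⟨hψ₀, concaveOn_of_rightInvOn hf hfmono hmaps hinv.2 (convex_Icc 0 1), hψmono,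
    fun y hy ↦ ?_⟩
  have hyI : y ∈ Icc (0 : ℝ) 1 := Ioc_subset_Icc_self hy
  have hpos : 0 < ψ y := hψ₀ ▸ hψmono (left_mem_Icc.2 zero_le_one) hyI hy.1
  have hlt := hmono hzero (hmaps hyI) hpos
  simp only [hf₀, hinv.2 hyI, sub_zero] at hlt
  exact sub_pos.1 hlt

end InverseBranch

/-! ### Markov maps of the unit interval -/

/-- `T` is, up to null sets, the full-branched Markov map of `[0, 1]` with inverse branches `ψ i`.
No condition is imposed on the order of the branch domains `ψ i '' Icc 0 1` or on the values of `T`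
at their endpoints. -/
structure IsMarkovMap {ι : Type*} (T : ℝ → ℝ) (ψ : ι → ℝ → ℝ) : Prop where
  aedisjoint : Pairwise fun i j ↦ AEDisjoint volume (ψ i '' Icc 0 1) (ψ j '' Icc 0 1)
  ae_cover : ∀ᵐ x, x ∈ Icc (0 : ℝ) 1 → x ∈ ⋃ i, ψ i '' Icc 0 1
  leftInverse : ∀ i, ∀ᵐ x, ∀ y ∈ Icc (0 : ℝ) 1, ψ i y = x → T x = y

/-- `B` is a measurable subset of `[0, 1]` which is invariant modulo null sets under the
restriction of `T` to `[0, 1]`. -/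
structure IsAEInvariant (T : ℝ → ℝ) (B : Set ℝ) : Prop where
  subset : B ⊆ Icc 0 1
  measurableSet : MeasurableSet B
  preimage_ae_eq : (Icc 0 1 ∩ T ⁻¹' B : Set ℝ) =ᵐ[volume] B

namespace IsMarkovMap

variable {ι : Type*} {T : ℝ → ℝ} {ψ ψ' : ι → ℝ → ℝ} {B : Set ℝ} {K : ℝ} {g : ℝ → ℝ≥0∞}

lemma isAEInvariant_Icc [Countable ι] (hT : IsMarkovMap T ψ) : IsAEInvariant T (Icc 0 1) where
  subset := Subset.rfl
  measurableSet := measurableSet_Icc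
  preimage_ae_eq := by
    filter_upwards [hT.ae_cover, ae_all_iff.2 hT.leftInverse] with x hx hTx
    refine propext ⟨And.left, fun hxI ↦ ⟨hxI, ?_⟩⟩
    obtain ⟨i, y, hy, hyx⟩ := mem_iUnion.1 (hx hxI)
    rwa [mem_preimage, hTx i y hy hyx]

lemma image_ae_eq (hT : IsMarkovMap T ψ) (hB : IsAEInvariant T B) {i : ι}
    (hψ : MapsTo (ψ i) (Icc 0 1) (Icc 0 1)) :
    (ψ i '' B : Set ℝ) =ᵐ[volume] (B ∩ ψ i '' Icc 0 1 : Set ℝ) := by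
  filter_upwards [hT.leftInverse i, hB.preimage_ae_eq.mem_iff] with x hTx hx
  refine propext ⟨?_, ?_⟩
  · rintro ⟨y, hy, rfl⟩
    have hyI := hB.subset hy
    exact ⟨hx.1 ⟨hψ hyI, by rwa [mem_preimage, hTx y hyI rfl]⟩, mem_image_of_mem _ hyI⟩
  · rintro ⟨hxB, y, hy, rfl⟩
    have hTB : T (ψ i y) ∈ B := (hx.2 hxB).2
    rw [hTx y hy rfl] at hTB
    exact mem_image_of_mem _ hTB

lemma ae_eq_iUnion (hT : IsMarkovMap T ψ) (hBI : B ⊆ Icc 0 1) :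
    B =ᵐ[volume] ⋃ i, (B ∩ ψ i '' Icc 0 1 : Set ℝ) := by
  rw [← inter_iUnion]
  filter_upwards [hT.ae_cover] with x hx
  exact propext ⟨fun hxB ↦ ⟨hxB, hx (hBI hxB)⟩, And.left⟩

lemma setLIntegral_eq_tsum [Countable ι] (hT : IsMarkovMap T ψ)
    (hψ : ∀ i, IsInverseBranch_s2 K (ψ i) (ψ' i)) (hB : IsAEInvariant T B) (g : ℝ → ℝ≥0∞) :
    ∫⁻ x in B, g x = ∑' i, ∫⁻ y in B, branchTransfer (ψ i) (ψ' i) g y := by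
  have himage : ∀ i, MeasurableSet (ψ i '' Icc 0 1) := fun i ↦
    (hψ i).measurableSet_iterate_image measurableSet_Icc Subset.rfl 1
  calc ∫⁻ x in B, g x
    _ = ∫⁻ x in ⋃ i, (B ∩ ψ i '' Icc 0 1 : Set ℝ), g x :=
        setLIntegral_congr (hT.ae_eq_iUnion hB.subset)
    _ = ∑' i, ∫⁻ x in B ∩ ψ i '' Icc 0 1, g x := lintegral_iUnion₀
        (fun i ↦ (hB.measurableSet.inter (himage i)).nullMeasurableSet)
        (hT.aedisjoint.mono fun i j hij ↦ hij.mono inter_subset_right inter_subset_right) g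
    _ = ∑' i, ∫⁻ y in B, branchTransfer (ψ i) (ψ' i) g y := tsum_congr fun i ↦ by
        rw [(hψ i).setLIntegral_branchTransfer hB.measurableSet hB.subset,
          setLIntegral_congr (hT.image_ae_eq hB (hψ i).mapsTo)]

lemma setLIntegral_eq_tsum_compl_add [Countable ι] (hT : IsMarkovMap T ψ)
    (hψ : ∀ i, IsInverseBranch_s2 K (ψ i) (ψ' i)) (hB : IsAEInvariant T B) (i₀ : ι) (g : ℝ → ℝ≥0∞) :
    ∫⁻ x in B, g x = (∑' j : ({i₀}ᶜ : Set ι), ∫⁻ y in B, branchTransfer (ψ j) (ψ' j) g y) +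
      ∫⁻ y in B, branchTransfer (ψ i₀) (ψ' i₀) g y := by
  have hsplit := ENNReal.summable.tsum_add_tsum_compl ENNReal.summable (s := {i₀})
    (f := fun i ↦ ∫⁻ y in B, branchTransfer (ψ i) (ψ' i) g y)
  rw [tsum_singleton i₀ fun i ↦ ∫⁻ y in B, branchTransfer (ψ i) (ψ' i) g y] at hsplit
  rw [hT.setLIntegral_eq_tsum hψ hB, ← hsplit, add_comm]

lemma setLIntegral_eq_sum_add [Countable ι] (hT : IsMarkovMap T ψ)
    (hψ : ∀ i, IsInverseBranch_s2 K (ψ i) (ψ' i)) (hB : IsAEInvariant T B) (i₀ : ι) (g : ℝ → ℝ≥0∞)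
    (n : ℕ) :
    ∫⁻ x in B, g x = (∑ k ∈ Finset.range n, ∑' j : ({i₀}ᶜ : Set ι),
        ∫⁻ y in B, branchTransfer (ψ j) (ψ' j) ((branchTransfer (ψ i₀) (ψ' i₀))^[k] g) y) +
      ∫⁻ y in B, (branchTransfer (ψ i₀) (ψ' i₀))^[n] g y := by
  induction n with
  | zero => simp
  | succ n ih =>
    rw [ih, Finset.sum_range_succ, add_assoc, Function.iterate_succ_apply',
      ← hT.setLIntegral_eq_tsum_compl_add hψ hB]

lemma setLIntegral_eq_tsum_jump [Countable ι] (hT : IsMarkovMap T ψ)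
    (hψ : ∀ i, IsInverseBranch_s2 K (ψ i) (ψ' i)) (hB : IsAEInvariant T B) {i₀ : ι}
    (hpar : IsParabolicInverse (ψ i₀)) (hg : ∫⁻ x in Icc 0 1, g x ≠ ∞) :
    ∫⁻ x in B, g x = ∑' q : ℕ × ({i₀}ᶜ : Set ι), ∫⁻ y in B,
      branchTransfer (ψ q.2) (ψ' q.2) ((branchTransfer (ψ i₀) (ψ' i₀))^[q.1] g) y := by
  have hlim := (ENNReal.tendsto_nat_tsum fun k ↦ ∑' j : ({i₀}ᶜ : Set ι), ∫⁻ y in B,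
    branchTransfer (ψ j) (ψ' j) ((branchTransfer (ψ i₀) (ψ' i₀))^[k] g) y).add
      ((hψ i₀).tendsto_setLIntegral_iterate_branchTransfer hpar hB.measurableSet hB.subset hg)
  rw [add_zero, ← ENNReal.tsum_prod] at hlim
  exact tendsto_nhds_unique
    (tendsto_const_nhds.congr (hT.setLIntegral_eq_sum_add hψ hB i₀ g)) hlim

end IsMarkovMap

theorem ergodic_of_intervalMapSetup_general {ι : Type*} [Countable ι] {T : ℝ → ℝ}
    {ψ ψ' : ι → ℝ → ℝ} (hT : IsMarkovMap T ψ) {K : ℝ} (hK : 0 ≤ K)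
    (hψ : ∀ i, IsInverseBranch_s2 K (ψ i) (ψ' i)) {i₀ : ι} (hpar : IsParabolicInverse (ψ i₀)) {p : ℝ}
    (hp : p ∈ Ioc (0 : ℝ) 1) {r : ℝ≥0} (hr : r < 1)
    (hfar : ∀ i ≠ i₀, MapsTo (ψ i) (Icc 0 1) (Icc p 1))
    (hcontr : ∀ i ≠ i₀, LipschitzOnWith r (ψ i) (Icc 0 1)) :
    ∀ A : Set ℝ, A ⊆ Icc 0 1 → MeasurableSet A → volume ((Icc 0 1 ∩ T ⁻¹' A) ∆ A) = 0 →
      volume A = 0 ∨ volume (Icc 0 1 \ A) = 0 := by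
  intro A hAI hA hTA
  have hinv : ∀ B ∈ ({Icc 0 1, A} : Set (Set ℝ)), IsAEInvariant T B := by
    rintro B (rfl | rfl)
    exacts [hT.isAEInvariant_Icc, ⟨hAI, hA, measure_symmDiff_eq_zero_iff.1 hTA⟩]
  have hdist : ∀ x ∈ Icc (0 : ℝ) 1, ∀ y ∈ Icc (0 : ℝ) 1, dist x y ≤ 1 :=
    fun _ hx _ hy ↦ Real.dist_le_of_mem_Icc_01 hx hy
  have hδ : 0 < p - ψ i₀ p := sub_pos.2 (hpar.lt_self p hp)
  refine measure_eq_zero_or_measure_diff_eq_zero_of_transfer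
    (fun q : ℕ × ({i₀}ᶜ : Set ι) ↦ fun h ↦
      branchTransfer (ψ q.2) (ψ' q.2) ((branchTransfer (ψ i₀) (ψ' i₀))^[q.1] h))
    (M := r * (K / (p - ψ i₀ p)) + K) hdist measurableSet_Icc (by simp) hA hAI r.coe_nonneg
    (by exact_mod_cast hr) (by positivity) (fun q c h hc hh ↦ ?_) fun B hB c h hc hh ↦ ?_
  · rw [← add_assoc, ← mul_add]
    exact (hψ q.2).isLogLipschitzOn_branchTransfer (hcontr q.2 q.2.2) (hfar q.2 q.2.2)
      (by positivity)
      ((hψ i₀).isLogLipschitzOn_iterate_branchTransfer hpar hK hc hh hp.1 q.1)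
  · exact hT.setLIntegral_eq_tsum_jump hψ (hinv B hB) hpar
      (hh.setLIntegral_ne_top hc hdist measurableSet_Icc (by simp))

/-! ### Interval maps with an indifferent fixed point -/

lemma iUnion_Ico_succ_eq_Ico_of_tendsto {α : Type*} [LinearOrder α] [TopologicalSpace α]
    [OrderTopology α] {a : ℕ → α} {b : α} (ha : Monotone a) (hab : ∀ n, a n < b)
    (hlim : Tendsto a atTop (𝓝 b)) : ⋃ n, Ico (a n) (a (n + 1)) = Ico (a 0) b := by
  refine Subset.antisymm (iUnion_subset fun n ↦ Ico_subset_Ico (ha n.zero_le) (hab _).le) ?_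
  rintro x ⟨hx₀, hxb⟩
  have hex : ∃ n, x < a (n + 1) :=
    (((tendsto_add_atTop_iff_nat 1).2 hlim).eventually_const_lt hxb).exists
  classical
  refine mem_iUnion.2 ⟨Nat.find hex, ?_, Nat.find_spec hex⟩
  rcases Nat.eq_zero_or_eq_succ_pred (Nat.find hex) with hzero | hsucc
  · rwa [hzero]
  · rw [hsucc]
    exact not_lt.1 (Nat.find_min hex (Nat.pred_lt (by omega)))

namespace IntervalMapSetup

variable (S : IntervalMapSetup)

/-- The inverse branch `φ_j⁻¹ : [0, 1] → [a_j, a_{j+1}]`. -/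
noncomputable def inverseBranch (j : ℕ) : ℝ → ℝ :=
  Function.invFunOn (S.φ j) (Icc (S.a j) (S.a (j + 1)))

/-- The derivative of `S.inverseBranch j`, by the inverse function rule. -/
noncomputable def inverseBranchDeriv (j : ℕ) (y : ℝ) : ℝ := (S.φd j (S.inverseBranch j y))⁻¹

lemma invOn_inverseBranch (j : ℕ) :
    InvOn (S.inverseBranch j) (S.φ j) (Icc (S.a j) (S.a (j + 1))) (Icc 0 1) :=
  (S.hφ_bij j).invOn_invFunOn

lemma bijOn_inverseBranch (j : ℕ) :
    BijOn (S.inverseBranch j) (Icc 0 1) (Icc (S.a j) (S.a (j + 1))) :=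
  (S.hφ_bij j).symm (S.invOn_inverseBranch j).symm

lemma Icc_subset_unitInterval (j : ℕ) : Icc (S.a j) (S.a (j + 1)) ⊆ Icc 0 1 :=
  Icc_subset_Icc (S.ha0 ▸ S.ha_mono.monotone j.zero_le) (S.ha_lt _).le

lemma φd_ne_zero (j : ℕ) {x : ℝ} (hx : x ∈ Icc (S.a j) (S.a (j + 1))) : S.φd j x ≠ 0 := by
  rcases j.eq_zero_or_pos with rfl | hj
  · rcases (S.Icc_subset_unitInterval 0 hx).1.eq_or_lt with rfl | hpos
    · exact S.hA4_d1 ▸ one_ne_zero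
    · exact (one_pos.trans (S.hA4_exp x hpos hx.2)).ne'
  · exact abs_pos.1 ((one_pos.trans S.hΛ).trans_le (S.hA2 j hj x hx))

lemma isInverseBranch (j : ℕ) :
    IsInverseBranch_s2 S.K (S.inverseBranch j) (S.inverseBranchDeriv j) :=
  isInverseBranch_of_invOn isCompact_Icc (S.Icc_subset_unitInterval j) (S.hφ_bij j)
    (S.invOn_inverseBranch j) (S.hφ_d j) (S.hφ_dd j) (fun _ ↦ S.φd_ne_zero j) (S.hA3 j)

lemma strictMonoOn_φ_zero_sub_id : StrictMonoOn (fun x ↦ S.φ 0 x - x) (Icc (S.a 0) (S.a 1)) := by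
  have hderiv : ∀ x ∈ Icc (S.a 0) (S.a 1),
      HasDerivWithinAt (fun x ↦ S.φ 0 x - x) (S.φd 0 x - 1) (Icc (S.a 0) (S.a 1)) x :=
    fun x hx ↦ (S.hφ_d 0 x hx).sub (hasDerivWithinAt_id x _)
  refine strictMonoOn_of_hasDerivWithinAt_pos (convex_Icc _ _)
    (fun x hx ↦ (hderiv x hx).continuousWithinAt)
    (fun x hx ↦ (hderiv x (interior_subset hx)).mono interior_subset) fun x hx ↦ ?_
  rw [interior_Icc, S.ha0] at hx
  exact sub_pos.2 (S.hA4_exp x hx.1 hx.2.le)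

lemma isParabolicInverse : IsParabolicInverse (S.inverseBranch 0) :=
  isParabolicInverse_of_invOn (S.ha0 ▸ S.hA4_conv) S.hA4_fix (S.ha0 ▸ S.strictMonoOn_φ_zero_sub_id)
    (S.ha0 ▸ S.hφ_bij 0) (S.ha0 ▸ S.invOn_inverseBranch 0)

lemma mapsTo_inverseBranch {j : ℕ} (hj : j ≠ 0) :
    MapsTo (S.inverseBranch j) (Icc 0 1) (Icc (S.a 1) 1) :=
  (S.bijOn_inverseBranch j).mapsTo.mono_right
    (Icc_subset_Icc (S.ha_mono.monotone (Nat.one_le_iff_ne_zero.2 hj)) (S.ha_lt _).le)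

lemma lipschitzOnWith_inverseBranch {j : ℕ} (hj : j ≠ 0) :
    LipschitzOnWith (Real.toNNReal S.Λ)⁻¹ (S.inverseBranch j) (Icc 0 1) := by
  refine (convex_Icc 0 1).lipschitzOnWith_of_nnnorm_hasDerivWithin_le
    (S.isInverseBranch j).hasDerivWithinAt fun y hy ↦ ?_
  have hΛ := S.hA2 j (Nat.one_le_iff_ne_zero.2 hj) _ ((S.bijOn_inverseBranch j).mapsTo hy)
  rw [inverseBranchDeriv, nnnorm_inv]
  exact inv_anti₀ (Real.toNNReal_pos.2 (one_pos.trans S.hΛ)) (Real.toNNReal_le_iff_le_coe.2 hΛ)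

lemma isMarkovMap : IsMarkovMap S.T S.inverseBranch where
  aedisjoint i j hij := by
    beta_reduce
    rw [(S.bijOn_inverseBranch i).image_eq, (S.bijOn_inverseBranch j).image_eq]
    exact (S.ha_mono.monotone.pairwise_disjoint_on_Ico_succ hij).aedisjoint.congr
      Ico_ae_eq_Icc.symm Ico_ae_eq_Icc.symm
  ae_cover := by
    filter_upwards [Measure.ae_ne volume 1] with x hx₁ hx
    have hmem : x ∈ ⋃ j, Ico (S.a j) (S.a (j + 1)) := by
      rw [iUnion_Ico_succ_eq_Ico_of_tendsto S.ha_mono.monotone S.ha_lt S.ha_lim, S.ha0]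
      exact ⟨hx.1, hx.2.lt_of_ne hx₁⟩
    simp only [(S.bijOn_inverseBranch _).image_eq]
    exact iUnion_mono (fun j ↦ Ico_subset_Icc_self) hmem
  leftInverse j := by
    filter_upwards [Measure.ae_ne volume (S.a j), Measure.ae_ne volume (S.a (j + 1))]
    rintro x hleft hright y hy rfl
    have hmem := (S.bijOn_inverseBranch j).mapsTo hy
    rw [S.hT_eq j _ ⟨hmem.1.lt_of_ne hleft.symm, hmem.2.lt_of_ne hright⟩,
      (S.invOn_inverseBranch j).2 hy]

end IntervalMapSetup

/-- a Markov interval map satisfying (A1)–(A4) is ergodic w.r.t. Lebesgue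
measure: every Borel `A ⊆ [0,1]` with `T⁻¹A = A` mod null sets is trivial. -/
theorem ergodic_of_intervalMapSetup (S : IntervalMapSetup) :
    ∀ A : Set ℝ, A ⊆ Set.Icc 0 1 → MeasurableSet A →
      volume (symmDiff (Set.Icc 0 1 ∩ S.T ⁻¹' A) A) = 0 →
      volume A = 0 ∨ volume (Set.Icc 0 1 \ A) = 0 :=
  ergodic_of_intervalMapSetup_general S.isMarkovMap S.hK.le S.isInverseBranch S.isParabolicInverse
    ⟨S.ha0 ▸ S.ha_mono one_pos, (S.ha_lt 1).le⟩
    (inv_lt_one_of_one_lt₀ (Real.one_lt_toNNReal.2 S.hΛ))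
    (fun _ ↦ S.mapsTo_inverseBranch) fun _ ↦ S.lipschitzOnWith_inverseBranch
end

section
/- (Miernowski–Nogueira criterion) Let (X, 𝒜, ν, T) be a non-singular and ergodic dynamical system on a σ-finite measure space. Then T is exact if and only if for every A ∈ 𝒜 with ν(A) > 0 there exists n = n(A) ∈ ℕ such that ν(T^{n+1}A ∩ T^n A) > 0. -/
open MeasureTheory Set Filter

/-- `A` belongs to the tail σ-algebra `𝒯 = ⋂ₙ T⁻ⁿ 𝒜`: for every `n`, `A` is the
`n`-fold preimage of some measurable set. -/
def IsTailSet {X : Type*} [MeasurableSpace X] (T : X → X) (A : Set X) : Prop :=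
  ∀ n : ℕ, ∃ B : Set X, MeasurableSet B ∧ A = T^[n] ⁻¹' B

/-- `A` belongs to the invariant σ-algebra `ℐ`: `A` is measurable and
`T⁻¹ A = A` mod `ν`. -/
def IsInvModNu {X : Type*} [MeasurableSpace X] (ν : Measure X) (T : X → X)
    (A : Set X) : Prop :=
  MeasurableSet A ∧ ν (symmDiff (T ⁻¹' A) A) = 0

/-!
The points with the same eventual orbit, without time shift, as some point of `A` form a tail set
`tailHull T A ⊇ A`. If `T` is exact and `A`, `B` have positive measure, then `tailHull T A` and
`tailHull T B` have full measure, hence so has their intersection, the increasing union of the sets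
`T⁻ⁿ (Tⁿ A ∩ Tⁿ B)`; non-singularity then makes some `Tⁿ A ∩ Tⁿ B` non-null. Take `B = T A`.

Conversely, if `A` is a tail set, so are `C = T⁻¹ A \ A` and `C = A \ T⁻¹ A`. Each is disjoint from
`T⁻¹ C`, and for a tail set this forces `Tⁿ⁺¹ C ∩ Tⁿ C = ∅` for all `n`, so both are null. Thus `A`
is invariant mod `ν`, and ergodicity applies.
-/

section TailSets

variable {X : Type*} [MeasurableSpace X] {T : X → X} {A B : Set X}

theorem IsTailSet.measurableSet (hA : IsTailSet T A) : MeasurableSet A := by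
  obtain ⟨B, hB, rfl⟩ := hA 0
  exact hB

theorem IsTailSet.preimage (hT : Measurable T) (hA : IsTailSet T A) : IsTailSet T (T ⁻¹' A) := by
  intro n
  obtain ⟨B, hB, rfl⟩ := hA n
  refine ⟨T ⁻¹' B, hT hB, ?_⟩
  rw [← preimage_comp, ← preimage_comp, ← Function.iterate_succ, Function.iterate_succ']

theorem IsTailSet.diff (hA : IsTailSet T A) (hB : IsTailSet T B) : IsTailSet T (A \ B) := by
  intro n
  obtain ⟨A', hA', rfl⟩ := hA n
  obtain ⟨B', hB', rfl⟩ := hB n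
  exact ⟨A' \ B', hA'.diff hB', rfl⟩

theorem IsTailSet.mem_iff_of_iterate_eq (hA : IsTailSet T A) {n : ℕ} {x y : X}
    (hxy : T^[n] x = T^[n] y) : x ∈ A ↔ y ∈ A := by
  obtain ⟨B, -, rfl⟩ := hA n
  rw [mem_preimage, mem_preimage, hxy]

theorem IsTailSet.disjoint_image_iterate_succ (hA : IsTailSet T A) (hdisj : Disjoint (T ⁻¹' A) A)
    (n : ℕ) : Disjoint (T^[n + 1] '' A) (T^[n] '' A) := by
  rw [Set.disjoint_left]
  rintro _ ⟨x, hx, rfl⟩ ⟨y, hy, hyx⟩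
  have hTx : T x ∈ A := (hA.mem_iff_of_iterate_eq hyx).1 hy
  exact Set.disjoint_left.1 hdisj hTx hx

theorem isTailSet_iUnion_preimage_iterate (hT : Measurable T) {C : ℕ → Set X}
    (hC : ∀ n, MeasurableSet (C n)) (hmono : Monotone fun n ↦ T^[n] ⁻¹' C n) :
    IsTailSet T (⋃ n, T^[n] ⁻¹' C n) := by
  intro k
  refine ⟨⋃ n, T^[n] ⁻¹' C (n + k), .iUnion fun n ↦ hT.iterate n (hC _), ?_⟩
  calc ⋃ n, T^[n] ⁻¹' C n
      = ⋃ n, T^[n + k] ⁻¹' C (n + k) := (hmono.iUnion_nat_add k).symm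
    _ = T^[k] ⁻¹' ⋃ n, T^[n] ⁻¹' C (n + k) := by
      simp only [Function.iterate_add, preimage_comp, preimage_iUnion]

theorem measurableSet_image_iterate (hTimg : ∀ A : Set X, MeasurableSet A → MeasurableSet (T '' A))
    (hA : MeasurableSet A) (n : ℕ) : MeasurableSet (T^[n] '' A) := by
  rw [image_iterate_eq]
  exact Function.Iterate.rec MeasurableSet hA hTimg n

end TailSets

/-- The tail saturation of `A`: the set of points `x` such that `T^[n] x = T^[n] a` for some `n`
and some `a ∈ A`. When `T` and the images `T^[n] '' A` are measurable, it is the smallest tail set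
containing `A`. -/
def tailHull {X : Type*} (T : X → X) (A : Set X) : Set X :=
  ⋃ n, T^[n] ⁻¹' (T^[n] '' A)

section TailHull

variable {X : Type*} (T : X → X) (A B : Set X)

theorem subset_tailHull : A ⊆ tailHull T A :=
  (subset_preimage_image T^[0] A).trans (subset_iUnion (fun n ↦ T^[n] ⁻¹' (T^[n] '' A)) 0)

theorem monotone_preimage_image_iterate : Monotone fun n ↦ T^[n] ⁻¹' (T^[n] '' A) := by
  refine monotone_nat_of_le_succ fun n x ↦ ?_
  rintro ⟨a, ha, hax⟩
  exact ⟨a, ha, by rw [Function.iterate_succ_apply', hax, Function.iterate_succ_apply']⟩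

theorem tailHull_inter_tailHull :
    tailHull T A ∩ tailHull T B = ⋃ n, T^[n] ⁻¹' (T^[n] '' A ∩ T^[n] '' B) :=
  (iUnion_inter_of_monotone (monotone_preimage_image_iterate T A)
    (monotone_preimage_image_iterate T B)).symm

variable {T A} in
theorem isTailSet_tailHull [MeasurableSpace X] (hT : Measurable T)
    (hA : ∀ n, MeasurableSet (T^[n] '' A)) : IsTailSet T (tailHull T A) :=
  isTailSet_iUnion_preimage_iterate hT hA (monotone_preimage_image_iterate T A)

end TailHull

/-- Exactness of `T` with respect to `ν`: the tail σ-algebra is trivial mod `ν`. -/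
def IsExactModNu {X : Type*} [MeasurableSpace X] (ν : Measure X) (T : X → X) : Prop :=
  ∀ A : Set X, IsTailSet T A → ν A = 0 ∨ ν Aᶜ = 0

section Criterion

variable {X : Type*} [MeasurableSpace X] {ν : Measure X} {T : X → X} {A B : Set X}

theorem quasiMeasurePreserving_of_forall_measure_preimage_eq_zero (hT : Measurable T)
    (hns : ∀ A : Set X, MeasurableSet A → ν A = 0 → ν (T ⁻¹' A) = 0) :
    Measure.QuasiMeasurePreserving T ν ν :=
  ⟨hT, .mk fun A hA hA0 ↦ by rw [Measure.map_apply hT hA, hns A hA hA0]⟩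

theorem measure_image_pos (hT : Measure.QuasiMeasurePreserving T ν ν) (hA : 0 < ν A) :
    0 < ν (T '' A) :=
  pos_iff_ne_zero.2 fun h ↦
    hA.ne' (measure_mono_null (subset_preimage_image T A) (hT.preimage_null h))

theorem IsExactModNu.tailHull_mem_ae (hex : IsExactModNu ν T) (hT : Measurable T)
    (hA : ∀ n, MeasurableSet (T^[n] '' A)) (hpos : 0 < ν A) : tailHull T A ∈ ae ν :=
  (hex _ (isTailSet_tailHull hT hA)).resolve_left
    (hpos.trans_le (measure_mono (subset_tailHull T A))).ne'

theorem IsExactModNu.exists_measure_image_inter_image_pos (hex : IsExactModNu ν T)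
    (hT : Measure.QuasiMeasurePreserving T ν ν)
    (hA : ∀ n, MeasurableSet (T^[n] '' A)) (hB : ∀ n, MeasurableSet (T^[n] '' B))
    (hA0 : 0 < ν A) (hB0 : 0 < ν B) : ∃ n, 0 < ν (T^[n] '' A ∩ T^[n] '' B) := by
  by_contra! hnull
  have hfull : tailHull T A ∩ tailHull T B ∈ ae ν :=
    inter_mem (hex.tailHull_mem_ae hT.measurable hA hA0) (hex.tailHull_mem_ae hT.measurable hB hB0)
  have hzero : ν (tailHull T A ∩ tailHull T B) = 0 := by
    rw [tailHull_inter_tailHull]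
    exact measure_iUnion_null fun n ↦ (hT.iterate n).preimage_null (nonpos_iff_eq_zero.1 (hnull n))
  have huniv : ν univ = 0 := by rw [← measure_congr (eventuallyEq_univ.2 hfull), hzero]
  exact hA0.ne' (measure_mono_null (subset_univ A) huniv)

theorem IsTailSet.isInvModNu (hA : IsTailSet T A) (hT : Measurable T)
    (hnull : ∀ C : Set X, MeasurableSet C →
      (∀ n, Disjoint (T^[n + 1] '' C) (T^[n] '' C)) → ν C = 0) : IsInvModNu ν T A := by
  have null_of_disjoint {C : Set X} (hC : IsTailSet T C) (hdisj : Disjoint (T ⁻¹' C) C) :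
      ν C = 0 :=
    hnull C hC.measurableSet (hC.disjoint_image_iterate_succ hdisj)
  have hTA : IsTailSet T (T ⁻¹' A) := hA.preimage hT
  have hentering : ν (T ⁻¹' A \ A) = 0 :=
    null_of_disjoint (hTA.diff hA) (disjoint_sdiff_left.mono_right sdiff_subset)
  have hleaving : ν (A \ T ⁻¹' A) = 0 :=
    null_of_disjoint (hA.diff hTA) (disjoint_sdiff_right.mono_left sdiff_subset)
  exact ⟨hA.measurableSet, measure_union_null hentering hleaving⟩

end Criterion

theorem exact_iff_asymptotically_intersecting_general
    {X : Type*} [MeasurableSpace X] (ν : Measure X) (T : X → X)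
    (hTmeas : Measurable T)
    (hTimg : ∀ A : Set X, MeasurableSet A → MeasurableSet (T '' A))
    (hns : ∀ A : Set X, MeasurableSet A → ν A = 0 → ν (T ⁻¹' A) = 0)
    (herg : ∀ A : Set X, IsInvModNu ν T A → ν A = 0 ∨ ν Aᶜ = 0) :
    IsExactModNu ν T ↔
      (∀ A : Set X, MeasurableSet A → 0 < ν A →
        ∃ n : ℕ, 0 < ν (T^[n + 1] '' A ∩ T^[n] '' A)) := by
  constructor
  · intro hex A hA hpos
    have hqmp := quasiMeasurePreserving_of_forall_measure_preimage_eq_zero hTmeas hns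
    obtain ⟨n, hn⟩ := hex.exists_measure_image_inter_image_pos hqmp
      (measurableSet_image_iterate hTimg (hTimg A hA)) (measurableSet_image_iterate hTimg hA)
      (measure_image_pos hqmp hpos) hpos
    exact ⟨n, by rwa [Function.iterate_succ, image_comp]⟩
  · intro hint A hA
    refine herg A (hA.isInvModNu hTmeas fun C hC hdisj ↦ ?_)
    by_contra hne
    obtain ⟨n, hn⟩ := hint C hC (pos_iff_ne_zero.2 hne)
    rw [(hdisj n).inter_eq, measure_empty] at hn
    exact hn.false

/-- Miernowski–Nogueira criterion: a non-singular ergodic dynamical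
system `(X, 𝒜, ν, T)` on a σ-finite measure space is exact iff every measurable set
of positive measure is asymptotically intersecting. -/
theorem exact_iff_asymptotically_intersecting
    {X : Type*} [MeasurableSpace X] (ν : Measure X) [SigmaFinite ν] (T : X → X)
    (hTmeas : Measurable T)
    (hTimg : ∀ A : Set X, MeasurableSet A → MeasurableSet (T '' A))
    (hTsurj : Function.Surjective T)
    (hns : ∀ A : Set X, MeasurableSet A → ν A = 0 → ν (T ⁻¹' A) = 0)
    (herg : ∀ A : Set X, IsInvModNu ν T A → ν A = 0 ∨ ν Aᶜ = 0) :
    (∀ A : Set X, IsTailSet T A → ν A = 0 ∨ ν Aᶜ = 0) ↔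
      (∀ A : Set X, MeasurableSet A → 0 < ν A →
        ∃ n : ℕ, 0 < ν (T^[n + 1] '' A ∩ T^[n] '' A)) :=
  exact_iff_asymptotically_intersecting_general ν T hTmeas hTimg hns herg
end

section
/- Let (X, 𝒜, ν, T) be a non-singular dynamical system on a σ-finite measure space, with invariant σ-algebra ℐ and tail σ-algebra 𝒯. If every A ∈ 𝒯 with ν(A) > 0 is asymptotically intersecting, then ℐ = 𝒯 (mod ν). -/
open MeasureTheory Set Filter

/-!
For a tail set `A` we have `T⁻ⁿ(Tⁿ A) = A`, hence `Tⁿ⁺¹ A ∩ Tⁿ A = Tⁿ(T A ∩ A)`: whatever `n` is,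
an asymptotically intersecting tail set meets its own image. If `A` is a tail set, then so is
`T⁻¹ A \ A`, which `T` maps into `A` and hence off itself; so it is null. The same argument for `Aᶜ`
shows that `A \ T⁻¹ A` is null. Conversely, by non-singularity a set invariant mod `ν` agrees
mod `ν` with a strictly invariant one, which is a tail set.
-/

namespace IsTailSet

variable {X : Type*} [MeasurableSpace X] {T : X → X} {A B : Set X}

theorem compl (hA : IsTailSet T A) : IsTailSet T Aᶜ := by
  intro n
  obtain ⟨A', hA', rfl⟩ := hA n
  exact ⟨A'ᶜ, hA'.compl, rfl⟩

theorem sdiff (hA : IsTailSet T A) (hB : IsTailSet T B) : IsTailSet T (A \ B) := by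
  intro n
  obtain ⟨A', hA', rfl⟩ := hA n
  obtain ⟨B', hB', rfl⟩ := hB n
  exact ⟨A' \ B', hA'.diff hB', rfl⟩

theorem preimage_s4 (hA : IsTailSet T A) (hT : Measurable T) : IsTailSet T (T ⁻¹' A) := by
  intro n
  obtain ⟨A', hA', rfl⟩ := hA n
  refine ⟨T ⁻¹' A', hT hA', ?_⟩
  rw [← preimage_comp, ← preimage_comp, ← Function.iterate_succ, ← Function.iterate_succ']

theorem of_preimage_eq (hA : MeasurableSet A) (hinv : T ⁻¹' A = A) : IsTailSet T A :=
  fun n ↦ ⟨A, hA, (Function.IsFixedPt.preimage_iterate hinv n).symm⟩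

theorem preimage_iterate_image_iterate (hA : IsTailSet T A) (n : ℕ) :
    T^[n] ⁻¹' (T^[n] '' A) = A := by
  obtain ⟨A', -, rfl⟩ := hA n
  exact preimage_image_preimage

theorem image_iterate_succ_inter_image_iterate (hA : IsTailSet T A) (n : ℕ) :
    T^[n + 1] '' A ∩ T^[n] '' A = T^[n] '' (T '' A ∩ A) := by
  rw [Function.iterate_succ, image_comp, ← image_inter_preimage,
    hA.preimage_iterate_image_iterate]

end IsTailSet

theorem disjoint_image_preimage_sdiff_self {X : Type*} (T : X → X) (A : Set X) :
    Disjoint (T '' (T ⁻¹' A \ A)) (T ⁻¹' A \ A) :=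
  disjoint_sdiff_right.mono_left (image_subset_iff.mpr sdiff_subset)

section TailInvariant

variable {X : Type*} [MeasurableSpace X] {ν : Measure X} {T : X → X} {A : Set X}

theorem IsTailSet.measure_preimage_sdiff_self_eq_zero (hA : IsTailSet T A) (hT : Measurable T)
    (hmeet : ∀ C : Set X, IsTailSet T C → 0 < ν C →
      ∃ n : ℕ, (T^[n + 1] '' C ∩ T^[n] '' C).Nonempty) :
    ν (T ⁻¹' A \ A) = 0 := by
  have htail : IsTailSet T (T ⁻¹' A \ A) := (hA.preimage_s4 hT).sdiff hA
  by_contra hpos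
  obtain ⟨n, hn⟩ := hmeet _ htail (pos_iff_ne_zero.mpr hpos)
  rw [htail.image_iterate_succ_inter_image_iterate, image_nonempty] at hn
  exact hn.not_disjoint (disjoint_image_preimage_sdiff_self T A)

theorem IsTailSet.measure_symmDiff_preimage_eq_zero (hA : IsTailSet T A) (hT : Measurable T)
    (hmeet : ∀ C : Set X, IsTailSet T C → 0 < ν C →
      ∃ n : ℕ, (T^[n + 1] '' C ∩ T^[n] '' C).Nonempty) :
    ν (symmDiff (T ⁻¹' A) A) = 0 := by
  have hcompl : ν (A \ T ⁻¹' A) = 0 := by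
    simpa only [preimage_compl, compl_sdiff_compl] using
      hA.compl.measure_preimage_sdiff_self_eq_zero hT hmeet
  exact measure_union_null (hA.measure_preimage_sdiff_self_eq_zero hT hmeet) hcompl

theorem IsInvModNu.exists_isTailSet_measure_symmDiff_eq_zero (hA : IsInvModNu ν T A)
    (hT : Measure.QuasiMeasurePreserving T ν ν) :
    ∃ B : Set X, IsTailSet T B ∧ ν (symmDiff A B) = 0 := by
  obtain ⟨B, hB, hBA, hinv⟩ := hT.exists_preimage_eq_of_preimage_ae hA.1.nullMeasurableSet
    (measure_symmDiff_eq_zero_iff.mp hA.2)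
  exact ⟨B, .of_preimage_eq hB hinv, measure_symmDiff_eq_zero_iff.mpr hBA.symm⟩

theorem inv_eq_tail_of_tail_asymptotically_intersecting_general
    (hT : Measure.QuasiMeasurePreserving T ν ν)
    (hmeet : ∀ A : Set X, IsTailSet T A → 0 < ν A →
      ∃ n : ℕ, (T^[n + 1] '' A ∩ T^[n] '' A).Nonempty) :
    (∀ A : Set X, IsTailSet T A → ν (symmDiff (T ⁻¹' A) A) = 0) ∧
      (∀ A : Set X, IsInvModNu ν T A →
        ∃ B : Set X, IsTailSet T B ∧ ν (symmDiff A B) = 0) :=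
  ⟨fun _ hA ↦ hA.measure_symmDiff_preimage_eq_zero hT.measurable hmeet,
    fun _ hA ↦ hA.exists_isTailSet_measure_symmDiff_eq_zero hT⟩

end TailInvariant

/-- if every tail set of positive measure is asymptotically intersecting,
then the invariant and tail σ-algebras coincide mod `ν`: every tail set is invariant
mod `ν`, and every invariant (mod `ν`) set agrees mod `ν` with a tail set. -/
theorem inv_eq_tail_of_tail_asymptotically_intersecting
    {X : Type*} [MeasurableSpace X] (ν : Measure X) [SigmaFinite ν] (T : X → X)
    (hTmeas : Measurable T)
    (hTimg : ∀ A : Set X, MeasurableSet A → MeasurableSet (T '' A))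
    (hTsurj : Function.Surjective T)
    (hns : ∀ A : Set X, MeasurableSet A → ν A = 0 → ν (T ⁻¹' A) = 0)
    (hai : ∀ A : Set X, IsTailSet T A → 0 < ν A →
      ∃ n : ℕ, 0 < ν (T^[n + 1] '' A ∩ T^[n] '' A)) :
    (∀ A : Set X, IsTailSet T A → ν (symmDiff (T ⁻¹' A) A) = 0) ∧
      (∀ A : Set X, IsInvModNu ν T A →
        ∃ B : Set X, IsTailSet T B ∧ ν (symmDiff A B) = 0) :=
  inv_eq_tail_of_tail_asymptotically_intersecting_general
    ⟨hTmeas, .mk fun s hs h0 ↦ (Measure.map_apply hTmeas hs).trans (hns s hs h0)⟩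
    fun A hA hpos ↦ (hai A hA hpos).imp fun _ hn ↦ nonempty_of_measure_ne_zero hn.ne'
end
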